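/- Two-sided bound on level-set flux integrals of a Green potential: let V : Ω → ℝ lie in M^q_loc(p;Ω), assume Q_{p,A,V} is subcritical in Ω, let φ ∈ C_c^∞(Ω) be nonnegative and not identically 0, and let G ∈ C^{1,α}(Ω) (α ∈ (0,1]) be a positive weak solution of Q_{p,A,V}(u) = φ in Ω satisfying: G → 0 at infinity in Ω, ∫_Ω V G^{p−1} dx < 0, and ∫_Ω |V| G^{p−1} dx < ∞. Then there exist M ∈ (0, sup_Ω G) and C > 0 such that for almost every t ∈ (0, M) for which supp φ ⊆ {x ∈ Ω : G(x) > t}: C⁻¹ ≤ ∫_{{x : G(x)=t}} |∇G|_A^p / |∇G| dH^{n−1} ≤ C, where H^{n−1} is the (n−1)-dimensional Hausdorff measure and the integrand is interpreted as 0 at points where ∇G = 0. -/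

import Mathlib

/-!
Write `g = |∇G|_A^p` and `w = φ - V G^{p-1}`. The function `w` is integrable on `Ω`, and
`∫ w = ∫ φ - ∫ V G^{p-1} > 0`.

**Flux identity in integrated form.** For a continuous `k ≥ 0` supported in `(a, M)` with `a > 0`,
let `h(y) = ∫_0^y k`. Since `G → 0` at infinity, `h ∘ G` is `C¹` with compact support in `Ω`, and the
weak formulation (extended from smooth to `C¹` test functions by mollification) gives
`∫_Ω k(G) g = ∫_Ω w h(G)` (`integral_comp_level`). As `0 ≤ h ≤ ∫ k`, with equality on `{G ≥ M}`,
`(∫ w - ∫_{G < M} |w|) ∫ k ≤ ∫_Ω k(G) g ≤ (∫ |w|) ∫ k` (`level_bounds`). For small `M` the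
mass of `|w|` on `{G < M}` is less than `½ ∫ w`, because `G > 0`. Hence the image under `G` of the
measure `g dx` is comparable to Lebesgue measure on `(0, M)` (`slab_bounds`).

**Coarea comparison.** The integrals `∫_{G = t} g / |∇G| dH^{n-1}` are, up to a factor depending only
on `n`, the density of that image measure (`exists_coareaComparable`). A comparison up to constants
replaces the exact coarea formula: near a regular point the level sets are Lipschitz graphs over a
coordinate hyperplane, and the map `x ↦ (G x, x')` has Jacobian `∂ᵢG`, comparable to `|∇G|` when `i`
is the index of the largest partial derivative.

Together these bound the level-set integrals from both sides for almost every `t ∈ (0, M)`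
(`CoareaComparable.ae_bounds`).
-/

open MeasureTheory Set Filter Topology

noncomputable section

variable {n : ℕ}

/-- The `A`-inner product `⟨A(x)ξ, η⟩`. -/
def aInner (A : EuclideanSpace ℝ (Fin n) → Matrix (Fin n) (Fin n) ℝ)
    (x ξ η : EuclideanSpace ℝ (Fin n)) : ℝ :=
  ∑ i, ∑ j, A x i j * ξ j * η i

/-- `|ξ|_A := ⟨A(x)ξ, ξ⟩^{1/2}`. -/
def aNorm (A : EuclideanSpace ℝ (Fin n) → Matrix (Fin n) (Fin n) ℝ)
    (x ξ : EuclideanSpace ℝ (Fin n)) : ℝ :=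
  Real.sqrt (aInner A x ξ ξ)

/-- Assumptions on the matrix field `A`: symmetric, positive definite, locally Hölder
continuous, and locally uniformly elliptic on `Ω`. -/
structure IsEllipticMatrix (Ω : Set (EuclideanSpace ℝ (Fin n)))
    (A : EuclideanSpace ℝ (Fin n) → Matrix (Fin n) (Fin n) ℝ) : Prop where
  symm : ∀ x ∈ Ω, (A x).IsSymm
  posdef : ∀ x ∈ Ω, ∀ ξ : EuclideanSpace ℝ (Fin n), ξ ≠ 0 → 0 < aInner A x ξ ξ
  locHolder : ∀ K ⊆ Ω, IsCompact K → ∃ C > (0:ℝ), ∃ α ∈ Set.Ioc (0:ℝ) 1,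
      ∀ x ∈ K, ∀ y ∈ K, ∀ i j, |A x i j - A y i j| ≤ C * dist x y ^ α
  elliptic : ∀ K ⊆ Ω, IsCompact K → ∃ Θ > (0:ℝ), ∀ x ∈ K, ∀ ξ : EuclideanSpace ℝ (Fin n),
      Θ⁻¹ * ‖ξ‖ ^ 2 ≤ aInner A x ξ ξ ∧ aInner A x ξ ξ ≤ Θ * ‖ξ‖ ^ 2

/-- Test functions: `C_c^∞` functions with support in `U`. -/
def IsTestFun (U : Set (EuclideanSpace ℝ (Fin n))) (ψ : EuclideanSpace ℝ (Fin n) → ℝ) : Prop :=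
  ContDiff ℝ (⊤ : ℕ∞) ψ ∧ HasCompactSupport ψ ∧ tsupport ψ ⊆ U

/-- Weakly `(p,A)`-harmonic in `U`. -/
def IsPAHarmonic (A : EuclideanSpace ℝ (Fin n) → Matrix (Fin n) (Fin n) ℝ) (p : ℝ)
    (U : Set (EuclideanSpace ℝ (Fin n))) (G : EuclideanSpace ℝ (Fin n) → ℝ) : Prop :=
  ∀ ψ, IsTestFun U ψ →
    ∫ x in U, (aNorm A x (gradient G x)) ^ (p - 2) *
      aInner A x (gradient G x) (gradient ψ x) = 0

/-- Weak solution of `Q_{p,A,V}(u) = g` in `U` (for positive `u`). -/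
def IsWeakSolution (A : EuclideanSpace ℝ (Fin n) → Matrix (Fin n) (Fin n) ℝ) (p : ℝ)
    (V g : EuclideanSpace ℝ (Fin n) → ℝ) (U : Set (EuclideanSpace ℝ (Fin n)))
    (u : EuclideanSpace ℝ (Fin n) → ℝ) : Prop :=
  ∀ ψ, IsTestFun U ψ →
    (∫ x in U, (aNorm A x (gradient u x)) ^ (p - 2) *
        aInner A x (gradient u x) (gradient ψ x))
      + (∫ x in U, V x * u x ^ (p - 1) * ψ x)
      = ∫ x in U, g x * ψ x

/-- Weak supersolution of `Q_{p,A,V}(u) = 0` in `U` (for positive `u`). -/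
def IsWeakSupersolution (A : EuclideanSpace ℝ (Fin n) → Matrix (Fin n) (Fin n) ℝ) (p : ℝ)
    (V : EuclideanSpace ℝ (Fin n) → ℝ) (U : Set (EuclideanSpace ℝ (Fin n)))
    (u : EuclideanSpace ℝ (Fin n) → ℝ) : Prop :=
  ∀ ψ, IsTestFun U ψ → (∀ x, 0 ≤ ψ x) →
    0 ≤ (∫ x in U, (aNorm A x (gradient u x)) ^ (p - 2) *
        aInner A x (gradient u x) (gradient ψ x))
      + (∫ x in U, V x * u x ^ (p - 1) * ψ x)

/-- `Q_{p,A,V}` is subcritical in `Ω`. -/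
def IsSubcritical (A : EuclideanSpace ℝ (Fin n) → Matrix (Fin n) (Fin n) ℝ) (p : ℝ)
    (V : EuclideanSpace ℝ (Fin n) → ℝ) (Ω : Set (EuclideanSpace ℝ (Fin n))) : Prop :=
  ∃ W₀ : EuclideanSpace ℝ (Fin n) → ℝ, ContinuousOn W₀ Ω ∧ (∀ x ∈ Ω, 0 ≤ W₀ x) ∧
    (∃ x ∈ Ω, W₀ x ≠ 0) ∧
    ∀ ψ, IsTestFun Ω ψ →
      0 ≤ ∫ x in Ω, ((aNorm A x (gradient ψ x)) ^ p + (V x - W₀ x) * |ψ x| ^ p)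

/-- A null-sequence for `Q_{p,A,V}` in `U`. -/
def IsNullSequence (A : EuclideanSpace ℝ (Fin n) → Matrix (Fin n) (Fin n) ℝ) (p : ℝ)
    (V : EuclideanSpace ℝ (Fin n) → ℝ) (U : Set (EuclideanSpace ℝ (Fin n)))
    (u : ℕ → EuclideanSpace ℝ (Fin n) → ℝ) : Prop :=
  (∀ k, IsTestFun U (u k)) ∧ (∀ k x, 0 ≤ u k x) ∧
  (∃ B : Set (EuclideanSpace ℝ (Fin n)), IsOpen B ∧ B.Nonempty ∧
      IsCompact (closure B) ∧ closure B ⊆ U ∧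
      ∃ c > (0:ℝ), ∀ k, c ≤ (∫ x in B, u k x ^ p) ∧ (∫ x in B, u k x ^ p) ≤ c⁻¹) ∧
  Tendsto (fun k => ∫ x in U,
      ((aNorm A x (gradient (u k) x)) ^ p + V x * |u k x| ^ p)) atTop (𝓝 0)

/-- `V` lies in the local Morrey space `M^q_loc(p;Ω)`. -/
def InMorreyLoc (p : ℝ) (Ω : Set (EuclideanSpace ℝ (Fin n)))
    (V : EuclideanSpace ℝ (Fin n) → ℝ) : Prop :=
  if p < n then
    ∃ q : ℝ, q > (n : ℝ) / p ∧ ∀ ω : Set (EuclideanSpace ℝ (Fin n)),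
      IsOpen ω → IsCompact (closure ω) → closure ω ⊆ Ω →
      ∃ M : ℝ, ∀ y ∈ ω, ∀ r ∈ Set.Ioo (0:ℝ) (Metric.diam ω),
        r ^ ((n : ℝ) / q - n) * (∫ x in ω ∩ Metric.ball y r, |V x|) ≤ M
  else if (n : ℝ) < p then
    MeasureTheory.LocallyIntegrableOn V Ω
  else
    ∃ q : ℝ, q > (n : ℝ) ∧ ∀ ω : Set (EuclideanSpace ℝ (Fin n)),
      IsOpen ω → IsCompact (closure ω) → closure ω ⊆ Ω →
      ∃ M : ℝ, ∀ y ∈ ω, ∀ r ∈ Set.Ioo (0:ℝ) (Metric.diam ω),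
        (Real.log (Metric.diam ω / r)) ^ (q * ((n : ℝ) - 1) / n) *
          (∫ x in ω ∩ Metric.ball y r, |V x|) ≤ M

/-- `G ∈ C^{1,α}(U)`: continuously differentiable with locally `α`-Hölder gradient. -/
def IsC1Holder (α : ℝ) (U : Set (EuclideanSpace ℝ (Fin n)))
    (G : EuclideanSpace ℝ (Fin n) → ℝ) : Prop :=
  ContDiffOn ℝ 1 G U ∧ ∀ K ⊆ U, IsCompact K → ∃ C : ℝ,
    ∀ x ∈ K, ∀ y ∈ K, ‖gradient G x - gradient G y‖ ≤ C * dist x y ^ α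

/-- `G → 0` at infinity in `Ω` (where `G` is considered on `U ⊆ Ω`). -/
def TendstoZeroAtInfinityIn (Ω U : Set (EuclideanSpace ℝ (Fin n)))
    (G : EuclideanSpace ℝ (Fin n) → ℝ) : Prop :=
  ∀ ε > (0:ℝ), ∃ K ⊆ Ω, IsCompact K ∧ ∀ x ∈ U \ K, G x < ε

open scoped Classical in
/-- Flux integral `∫_S |∇G|_A^p / |∇G| dH^{n-1}`, with integrand `0` where `∇G = 0`. -/
def fluxIntegral (A : EuclideanSpace ℝ (Fin n) → Matrix (Fin n) (Fin n) ℝ) (p : ℝ)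
    (G : EuclideanSpace ℝ (Fin n) → ℝ) (S : Set (EuclideanSpace ℝ (Fin n))) : ℝ :=
  ∫ x in S, (if gradient G x = 0 then 0
    else (aNorm A x (gradient G x)) ^ p / ‖gradient G x‖) ∂(μH[(n : ℝ) - 1])

end

open scoped ENNReal NNReal

/-! ### Level sets as Lipschitz graphs and the straightening change of variables -/

/-- The projection of `ℝ^{m+1}` forgetting the `i`-th coordinate. The target `Fin m → ℝ` carries
the sup norm, for which `m`-dimensional Hausdorff measure is Lebesgue measure. -/
def projAway {m : ℕ} (i : Fin (m + 1)) (x : EuclideanSpace ℝ (Fin (m + 1))) : Fin m → ℝ :=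
  fun j => x (i.succAbove j)

lemma lipschitzWith_projAway {m : ℕ} (i : Fin (m + 1)) : LipschitzWith 1 (projAway i) := by
  refine LipschitzWith.of_dist_le_mul fun x y => ?_
  rw [NNReal.coe_one, one_mul, dist_pi_le_iff dist_nonneg]
  intro j
  rw [dist_eq_norm x y, Real.dist_eq]
  simpa [projAway, Real.norm_eq_abs] using PiLp.norm_apply_le (x - y) (i.succAbove j)

lemma norm_le_abs_add_projAway {m : ℕ} (i : Fin (m + 1)) (v : EuclideanSpace ℝ (Fin (m + 1))) :
    ‖v‖ ≤ |v i| + m * ‖projAway i v‖ := by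
  have h1 : ‖v‖ ≤ ∑ j, |v j| := by
    conv_lhs => rw [← (EuclideanSpace.basisFun (Fin (m + 1)) ℝ).sum_repr v]
    refine (norm_sum_le _ _).trans (le_of_eq (Finset.sum_congr rfl fun j _ => ?_))
    simp [norm_smul]
  refine h1.trans ?_
  rw [Fin.sum_univ_succAbove _ i]
  gcongr
  have : ∀ j ∈ Finset.univ, |v (i.succAbove j)| ≤ ‖projAway i v‖ := fun j _ =>
    norm_le_pi_norm (projAway i v) j
  simpa using Finset.sum_le_card_nsmul _ _ _ this

/-- If the `i`-th coefficient of `L` dominates the others, then `L v` and the remaining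
coordinates of `v` control `v i`. -/
lemma abs_coord_le {m : ℕ} (i : Fin (m + 1)) (L : EuclideanSpace ℝ (Fin (m + 1)) →L[ℝ] ℝ) {a : ℝ}
    (ha : |L (EuclideanSpace.single i 1)| = a)
    (hmax : ∀ j, |L (EuclideanSpace.single j 1)| ≤ a) (v : EuclideanSpace ℝ (Fin (m + 1))) :
    a * |v i| ≤ |L v| + a * (m * ‖projAway i v‖) := by
  have ha0 : 0 ≤ a := ha ▸ abs_nonneg _
  have h1 : L v = ∑ j, v j * L (EuclideanSpace.single j 1) := by
    conv_lhs => rw [← (EuclideanSpace.basisFun (Fin (m + 1)) ℝ).sum_repr v]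
    simp
  rw [Fin.sum_univ_succAbove _ i] at h1
  have h2 : |∑ j, v (i.succAbove j) * L (EuclideanSpace.single (i.succAbove j) 1)|
      ≤ a * (m * ‖projAway i v‖) := by
    refine (Finset.abs_sum_le_sum_abs _ _).trans ?_
    have : ∀ j ∈ Finset.univ, |v (i.succAbove j) * L (EuclideanSpace.single (i.succAbove j) 1)|
        ≤ ‖projAway i v‖ * a := fun j _ => by
      rw [abs_mul]
      gcongr
      · exact norm_le_pi_norm (projAway i v) j
      · exact hmax _
    have := Finset.sum_le_card_nsmul _ _ _ this
    rw [Finset.card_univ, Fintype.card_fin, nsmul_eq_mul] at this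
    linarith
  have h3 : v i * L (EuclideanSpace.single i 1) = L v -
    ∑ j, v (i.succAbove j) * L (EuclideanSpace.single (i.succAbove j) 1) := by linarith
  calc a * |v i| = |v i * L (EuclideanSpace.single i 1)| := by rw [abs_mul, ha]; ring
    _ ≤ _ := by rw [h3]; exact (abs_sub _ _).trans (by gcongr)

/-- On a ball where `dG` stays close to its value at the centre, the level sets of `G` are
Lipschitz graphs over the hyperplane orthogonal to the dominant coordinate direction. -/
lemma dist_le_projAway_of_level {m : ℕ} {G : EuclideanSpace ℝ (Fin (m + 1)) → ℝ}
    {x₀ : EuclideanSpace ℝ (Fin (m + 1))} {r a : ℝ} (i : Fin (m + 1)) (ha0 : 0 < a)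
    (hdiff : ∀ x ∈ Metric.ball x₀ r, DifferentiableAt ℝ G x)
    (hclose : ∀ x ∈ Metric.ball x₀ r, ‖fderiv ℝ G x - fderiv ℝ G x₀‖ ≤ a / 2)
    (ha : |fderiv ℝ G x₀ (EuclideanSpace.single i 1)| = a)
    (hmax : ∀ j, |fderiv ℝ G x₀ (EuclideanSpace.single j 1)| ≤ a)
    {x y : EuclideanSpace ℝ (Fin (m + 1))} (hx : x ∈ Metric.ball x₀ r)
    (hy : y ∈ Metric.ball x₀ r) (hxy : G x = G y) :
    dist x y ≤ (4 * m : ℝ) * dist (projAway i x) (projAway i y) := by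
  have h1 := (convex_ball x₀ r).norm_image_sub_le_of_norm_fderiv_le' hdiff hclose hy hx
  rw [hxy, sub_self, zero_sub, norm_neg, Real.norm_eq_abs] at h1
  have h2 := abs_coord_le i _ ha hmax (x - y)
  have h3 := norm_le_abs_add_projAway i (x - y)
  have h4 : dist (projAway i x) (projAway i y) = ‖projAway i (x - y)‖ := by
    rw [dist_eq_norm]; congr 1
  rw [dist_eq_norm, h4]
  set P := ‖projAway i (x - y)‖
  set q := |(x - y) i|
  have h5 : a * q ≤ a * (3 * (m * P)) := by nlinarith
  have h6 := le_of_mul_le_mul_left h5 ha0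
  linarith

lemma measurableSet_inter_preimage_of_continuousOn {X : Type*} [TopologicalSpace X]
    [MeasurableSpace X] [BorelSpace X] {G : X → ℝ} {B E : Set X} (hB : IsOpen B)
    (hG : ContinuousOn G B) (hEB : E ⊆ B) (hE : MeasurableSet E) {T : Set ℝ}
    (hT : MeasurableSet T) : MeasurableSet (E ∩ G ⁻¹' T) := by
  have h1 : MeasurableSet (B ∩ G ⁻¹' T) := by
    have := (continuousOn_iff_continuous_domRestrict.1 hG).measurable hT
    have h2 := hB.measurableSet.subtype_image this
    convert h2 using 1
    ext x; simp [and_comm]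
  convert hE.inter h1 using 1
  ext x; simp; intro h; simp [hEB h]

/-- The straightening change of variables `x ↦ (G x, x')`, where `x'` omits the `i`-th
coordinate: its Jacobian is `∂ᵢG`. -/
lemma volume_image_straighten {m : ℕ} {G : EuclideanSpace ℝ (Fin (m + 1)) → ℝ}
    (i : Fin (m + 1)) {S : Set (EuclideanSpace ℝ (Fin (m + 1)))} (hS : MeasurableSet S)
    (hdiff : ∀ x ∈ S, DifferentiableAt ℝ G x)
    (hinj : InjOn (fun x => (G x, projAway i x)) S) :
    MeasurableSet ((fun x => (G x, projAway i x)) '' S) ∧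
    (volume : Measure (ℝ × (Fin m → ℝ))) ((fun x => (G x, projAway i x)) '' S) =
      ∫⁻ x in S, ENNReal.ofReal |fderiv ℝ G x (EuclideanSpace.single i 1)| := by
  have hGc : ContinuousOn G S := fun x hx => (hdiff x hx).continuousAt.continuousWithinAt
  have hmeas : MeasurableSet ((fun x => (G x, projAway i x)) '' S) :=
    hS.image_of_continuousOn_injOn
      (hGc.prodMk (lipschitzWith_projAway i).continuous.continuousOn) hinj
  refine ⟨hmeas, ?_⟩
  let e : EuclideanSpace ℝ (Fin (m + 1)) → ℝ × (Fin m → ℝ) := fun x => (x i, projAway i x)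
  have he : MeasurePreserving e := by
    exact (volume_preserving_piFinSuccAbove (fun _ : Fin (m + 1) => ℝ) i).comp
      (EuclideanSpace.volume_preserving_symm_measurableEquiv_toLp (Fin (m + 1)))
  -- Composed with the identification `e` of `ℝ^{m+1}` with `ℝ × ℝ^m`, the straightening map is
  -- the self-map `Φ`, whose derivative is a transvection with determinant `∂ᵢG`.
  let Φ : EuclideanSpace ℝ (Fin (m + 1)) → EuclideanSpace ℝ (Fin (m + 1)) :=
    fun x => x + (G x - x i) • EuclideanSpace.single i (1 : ℝ)
  have hei : ∀ x y, e x = e y → x = y := by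
    intro x y h
    ext j
    refine Fin.succAboveCases i ?_ (fun k => ?_) j
    · exact congrArg Prod.fst h
    · exact congrFun (congrArg Prod.snd h) k
  have heΦ : ∀ x, e (Φ x) = (G x, projAway i x) := by
    intro x
    ext j
    · simp [e, Φ]
    · simp [e, Φ, projAway]
  have hpre : e ⁻¹' ((fun x => (G x, projAway i x)) '' S) = Φ '' S := by
    ext y
    simp only [mem_preimage, mem_image]
    constructor
    · rintro ⟨x, hx, h⟩
      exact ⟨x, hx, hei _ _ (by rw [heΦ, h])⟩
    · rintro ⟨x, hx, rfl⟩
      exact ⟨x, hx, (heΦ x).symm⟩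
  rw [← he.measure_preimage hmeas.nullMeasurableSet, hpre]
  let f' : EuclideanSpace ℝ (Fin (m + 1)) →
      (EuclideanSpace ℝ (Fin (m + 1)) →L[ℝ] EuclideanSpace ℝ (Fin (m + 1))) := fun x =>
    ContinuousLinearMap.id ℝ _ +
      (fderiv ℝ G x - EuclideanSpace.proj i).smulRight (EuclideanSpace.single i (1 : ℝ))
  have hd : ∀ x ∈ S, HasFDerivWithinAt Φ (f' x) S x := by
    intro x hx
    have h1 := (hdiff x hx).hasFDerivAt
    have h2 : HasFDerivAt (fun x : EuclideanSpace ℝ (Fin (m + 1)) => x i)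
      (EuclideanSpace.proj i : EuclideanSpace ℝ (Fin (m + 1)) →L[ℝ] ℝ) x :=
      (EuclideanSpace.proj i : EuclideanSpace ℝ (Fin (m + 1)) →L[ℝ] ℝ).hasFDerivAt
    exact ((hasFDerivAt_id x).add ((h1.sub h2).smul_const _)).hasFDerivWithinAt
  have hΦinj : InjOn Φ S := by
    intro x hx y hy h
    refine hinj hx hy ?_
    simp only
    rw [← heΦ, ← heΦ, h]
  have hdet : ∀ x, (f' x).det = fderiv ℝ G x (EuclideanSpace.single i 1) := by
    intro x
    have : ((f' x : EuclideanSpace ℝ (Fin (m + 1)) →L[ℝ] EuclideanSpace ℝ (Fin (m + 1))) :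
        EuclideanSpace ℝ (Fin (m + 1)) →ₗ[ℝ] EuclideanSpace ℝ (Fin (m + 1))) =
        LinearMap.transvection ((fderiv ℝ G x - EuclideanSpace.proj i :
          EuclideanSpace ℝ (Fin (m + 1)) →L[ℝ] ℝ) : EuclideanSpace ℝ (Fin (m + 1)) →ₗ[ℝ] ℝ)
          (EuclideanSpace.single i (1 : ℝ)) := by
      ext v
      simp [f', LinearMap.transvection.apply]
    rw [ContinuousLinearMap.det, this, LinearMap.transvection.det]
    simp
  rw [← lintegral_abs_det_fderiv_eq_addHaar_image volume hS hd hΦinj]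
  simp_rw [hdet]

/-! ### Local coarea comparison -/

/-- A two-sided coarea formula on `E`, up to the factor `D`: up to `D`, the level-set integrals
`∫_{E ∩ {G = t}} f dH^m` are given by a measurable function `J`, which in turn is up to `D` the
density of the image under `G` of the measure `g dx` on `E`. Measurability in `t` of the level-set
integrals themselves is not claimed. -/
def CoareaComparable {m : ℕ} (D : ℝ≥0) (G : EuclideanSpace ℝ (Fin (m + 1)) → ℝ)
    (f g : EuclideanSpace ℝ (Fin (m + 1)) → ℝ≥0∞) (E : Set (EuclideanSpace ℝ (Fin (m + 1)))) :
    Prop :=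
  ∃ J : ℝ → ℝ≥0∞, Measurable J ∧
    (∀ t, J t ≤ D * ∫⁻ x in E ∩ G ⁻¹' {t}, f x ∂(μH[(m : ℝ)])) ∧
    (∀ t, ∫⁻ x in E ∩ G ⁻¹' {t}, f x ∂(μH[(m : ℝ)]) ≤ D * J t) ∧
    ∀ T, MeasurableSet T →
      (∫⁻ t in T, J t) ≤ D * (∫⁻ x in E ∩ G ⁻¹' T, g x) ∧
      (∫⁻ x in E ∩ G ⁻¹' T, g x) ≤ D * (∫⁻ t in T, J t)

/-- The comparison on a ball where `dG` is almost constant, with dominant partial derivative `∂ᵢG`,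
and where `f` is comparable to a constant `c` and `g` to `c |∂ᵢG|`. In the coordinates
`(G x, x')` level sets become slices: the projection `x ↦ x'` is bi-Lipschitz on each of them, so
slice volumes are comparable to Hausdorff measures, and their integral over the levels is computed
by the change of variables. -/
lemma coareaComparable_local {m : ℕ} {G : EuclideanSpace ℝ (Fin (m + 1)) → ℝ}
    {x₀ : EuclideanSpace ℝ (Fin (m + 1))} {r a : ℝ} (i : Fin (m + 1)) (ha0 : 0 < a)
    (hdiff : ∀ x ∈ Metric.ball x₀ r, DifferentiableAt ℝ G x)
    (hclose : ∀ x ∈ Metric.ball x₀ r, ‖fderiv ℝ G x - fderiv ℝ G x₀‖ ≤ a / 2)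
    (ha : |fderiv ℝ G x₀ (EuclideanSpace.single i 1)| = a)
    (hmax : ∀ j, |fderiv ℝ G x₀ (EuclideanSpace.single j 1)| ≤ a)
    (f g : EuclideanSpace ℝ (Fin (m + 1)) → ℝ≥0∞) (c : ℝ≥0∞) (D : ℝ≥0)
    (hf1 : ∀ x ∈ Metric.ball x₀ r, c ≤ D * f x) (hf2 : ∀ x ∈ Metric.ball x₀ r, f x ≤ D * c)
    (hc : c ≠ ⊤)
    (hg1 : ∀ x ∈ Metric.ball x₀ r,
      c * ENNReal.ofReal |fderiv ℝ G x (EuclideanSpace.single i 1)| ≤ D * g x)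
    (hg2 : ∀ x ∈ Metric.ball x₀ r,
      g x ≤ D * (c * ENNReal.ofReal |fderiv ℝ G x (EuclideanSpace.single i 1)|))
    {E : Set (EuclideanSpace ℝ (Fin (m + 1)))} (hE : MeasurableSet E)
    (hEB : E ⊆ Metric.ball x₀ r) :
    CoareaComparable (D * (1 + (4 * m) ^ m)) G f g E := by
  have hGc : ContinuousOn G (Metric.ball x₀ r) := fun x hx =>
    (hdiff x hx).continuousAt.continuousWithinAt
  have hmeas : ∀ T, MeasurableSet T → MeasurableSet (E ∩ G ⁻¹' T) := fun T hT =>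
    measurableSet_inter_preimage_of_continuousOn Metric.isOpen_ball hGc hEB hE hT
  have hinj : InjOn (fun x => (G x, projAway i x)) E := by
    intro x hx y hy h
    have h1 : G x = G y := congrArg Prod.fst h
    have h2 : projAway i x = projAway i y := congrArg Prod.snd h
    have := dist_le_projAway_of_level i ha0 hdiff hclose ha hmax (hEB hx) (hEB hy) h1
    rw [h2, dist_self, mul_zero] at this
    exact dist_le_zero.1 this
  obtain ⟨hW, -⟩ := volume_image_straighten i hE (fun x hx => hdiff x (hEB hx)) hinj
  set W := (fun x => (G x, projAway i x)) '' E with hWdef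
  have hslice : ∀ t, Prod.mk t ⁻¹' W = projAway i '' (E ∩ G ⁻¹' {t}) := by
    intro t
    ext y
    simp only [hWdef, mem_preimage, mem_image, Prod.mk.injEq, mem_inter_iff, mem_singleton_iff]
    constructor
    · rintro ⟨x, hx, h1, h2⟩; exact ⟨x, ⟨hx, h1⟩, h2⟩
    · rintro ⟨x, ⟨hx, h1⟩, h2⟩; exact ⟨x, hx, h1, h2⟩
  have hvol : (μH[(m : ℝ)] : Measure (Fin m → ℝ)) = volume := by
    have := hausdorffMeasure_pi_real (ι := Fin m)
    simpa using this
  have hH1 : ∀ t, volume (Prod.mk t ⁻¹' W) ≤ μH[(m : ℝ)] (E ∩ G ⁻¹' {t}) := by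
    intro t
    rw [hslice, ← hvol]
    simpa using (lipschitzWith_projAway i).hausdorffMeasure_image_le
      (Nat.cast_nonneg m) (E ∩ G ⁻¹' {t})
  have hH2 : ∀ t, μH[(m : ℝ)] (E ∩ G ⁻¹' {t}) ≤
      ((4 * m : ℝ≥0) ^ m : ℝ≥0) * volume (Prod.mk t ⁻¹' W) := by
    intro t
    rw [hslice, ← hvol]
    set S := E ∩ G ⁻¹' {t}
    have hanti : ∀ x ∈ S, ∀ y ∈ S,
        dist x y ≤ (4 * m : ℝ) * dist (projAway i x) (projAway i y) := fun x hx y hy =>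
      dist_le_projAway_of_level i ha0 hdiff hclose ha hmax (hEB hx.1) (hEB hy.1)
        ((show G x = t from hx.2).trans (show G y = t from hy.2).symm)
    have hSinj : InjOn (projAway i) S := by
      intro x hx y hy h
      have := hanti x hx y hy
      rw [h, dist_self, mul_zero] at this
      exact dist_le_zero.1 this
    have hlip : LipschitzOnWith (4 * m : ℝ≥0) (Function.invFunOn (projAway i) S)
        (projAway i '' S) := by
      refine LipschitzOnWith.of_dist_le_mul ?_
      rintro _ ⟨x, hx, rfl⟩ _ ⟨y, hy, rfl⟩
      rw [hSinj.leftInvOn_invFunOn hx, hSinj.leftInvOn_invFunOn hy]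
      simpa using hanti x hx y hy
    have := hlip.hausdorffMeasure_image_le (d := (m : ℝ)) (Nat.cast_nonneg m)
    rw [hSinj.leftInvOn_invFunOn.image_image] at this
    simpa using this
  have hD0 : (D : ℝ≥0∞) ≤ (D * (1 + (4 * m) ^ m) : ℝ≥0) := by
    norm_cast
    exact le_mul_of_one_le_right zero_le (by simp)
  have hD1 : (D * ((4 * m : ℝ≥0) ^ m : ℝ≥0) : ℝ≥0∞) ≤ (D * (1 + (4 * m) ^ m) : ℝ≥0) := by
    norm_cast
    exact mul_le_mul_right (by simp) D
  refine ⟨fun t => c * volume (Prod.mk t ⁻¹' W),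
    (measurable_measure_prodMk_left hW).const_mul c, fun t => ?_, fun t => ?_, fun T hT => ?_⟩
  · calc c * volume (Prod.mk t ⁻¹' W) ≤ c * μH[(m : ℝ)] (E ∩ G ⁻¹' {t}) := by gcongr; exact hH1 t
      _ = ∫⁻ x in E ∩ G ⁻¹' {t}, c ∂(μH[(m : ℝ)]) := by simp
      _ ≤ ∫⁻ x in E ∩ G ⁻¹' {t}, D * f x ∂(μH[(m : ℝ)]) :=
          setLIntegral_mono' (hmeas _ (measurableSet_singleton t)) fun x hx => hf1 x (hEB hx.1)
      _ = D * ∫⁻ x in E ∩ G ⁻¹' {t}, f x ∂(μH[(m : ℝ)]) :=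
          lintegral_const_mul' _ _ ENNReal.coe_ne_top
      _ ≤ _ := by gcongr
  · calc ∫⁻ x in E ∩ G ⁻¹' {t}, f x ∂(μH[(m : ℝ)])
        ≤ ∫⁻ x in E ∩ G ⁻¹' {t}, D * c ∂(μH[(m : ℝ)]) :=
          setLIntegral_mono' (hmeas _ (measurableSet_singleton t)) fun x hx => hf2 x (hEB hx.1)
      _ = D * c * μH[(m : ℝ)] (E ∩ G ⁻¹' {t}) := by simp
      _ ≤ D * c * (((4 * m : ℝ≥0) ^ m : ℝ≥0) * volume (Prod.mk t ⁻¹' W)) := by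
          gcongr; exact hH2 t
      _ = (D * ((4 * m : ℝ≥0) ^ m : ℝ≥0)) * (c * volume (Prod.mk t ⁻¹' W)) := by ring
      _ ≤ _ := by gcongr
  · have hkey : (∫⁻ t in T, c * volume (Prod.mk t ⁻¹' W)) =
        ∫⁻ x in E ∩ G ⁻¹' T,
          c * ENNReal.ofReal |fderiv ℝ G x (EuclideanSpace.single i 1)| := by
      rw [lintegral_const_mul' _ _ hc, lintegral_const_mul' _ _ hc]
      congr 1
      obtain ⟨-, h2⟩ := volume_image_straighten i (hmeas T hT)
        (fun x hx => hdiff x (hEB hx.1)) (hinj.mono inter_subset_left)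
      rw [← h2, ← Measure.prod_apply hW]
      have : (fun x => (G x, projAway i x)) '' (E ∩ G ⁻¹' T) = W ∩ (T ×ˢ univ) := by
        rw [hWdef, ← image_inter_preimage]
        congr 1
        ext x; simp
      rw [this, Measure.volume_eq_prod, ← Measure.restrict_apply hW, ← Measure.prod_restrict,
        Measure.restrict_univ]
    have hm := hmeas T hT
    rw [hkey]
    constructor
    · calc _ ≤ ∫⁻ x in E ∩ G ⁻¹' T, D * g x := setLIntegral_mono' hm fun x hx => hg1 x (hEB hx.1)
        _ = D * ∫⁻ x in E ∩ G ⁻¹' T, g x := lintegral_const_mul' _ _ ENNReal.coe_ne_top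
        _ ≤ _ := by gcongr
    · calc ∫⁻ x in E ∩ G ⁻¹' T, g x
          ≤ ∫⁻ x in E ∩ G ⁻¹' T,
            D * (c * ENNReal.ofReal |fderiv ℝ G x (EuclideanSpace.single i 1)|) :=
            setLIntegral_mono' hm fun x hx => hg2 x (hEB hx.1)
        _ = D * ∫⁻ x in E ∩ G ⁻¹' T,
            c * ENNReal.ofReal |fderiv ℝ G x (EuclideanSpace.single i 1)| :=
            lintegral_const_mul' _ _ ENNReal.coe_ne_top
        _ ≤ _ := by gcongr

/-- The factor `D` is not affected by countable disjoint unions. -/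
lemma CoareaComparable.iUnion {m : ℕ} {D : ℝ≥0} {G : EuclideanSpace ℝ (Fin (m + 1)) → ℝ}
    {f g : EuclideanSpace ℝ (Fin (m + 1)) → ℝ≥0∞} {E : ℕ → Set (EuclideanSpace ℝ (Fin (m + 1)))}
    (hE : ∀ k, CoareaComparable D G f g (E k)) (hdisj : Pairwise (Function.onFun Disjoint E))
    (hmeas : ∀ k T, MeasurableSet T → MeasurableSet (E k ∩ G ⁻¹' T)) :
    CoareaComparable D G f g (⋃ k, E k) := by
  choose J hJm hJ1 hJ2 hJ3 using hE
  have hdisj' : ∀ T, Pairwise (Function.onFun Disjoint fun k => E k ∩ G ⁻¹' T) :=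
    fun T a b hab => (hdisj hab).mono inter_subset_left inter_subset_left
  have h1 : ∀ t, ∫⁻ x in (⋃ k, E k) ∩ G ⁻¹' {t}, f x ∂(μH[(m : ℝ)]) =
      ∑' k, ∫⁻ x in E k ∩ G ⁻¹' {t}, f x ∂(μH[(m : ℝ)]) := fun t => by
    rw [iUnion_inter, lintegral_iUnion (fun k => hmeas k _ (measurableSet_singleton t))
      (hdisj' _)]
  have h2 : ∀ T, MeasurableSet T → ∫⁻ x in (⋃ k, E k) ∩ G ⁻¹' T, g x =
      ∑' k, ∫⁻ x in E k ∩ G ⁻¹' T, g x := fun T hT => by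
    rw [iUnion_inter, lintegral_iUnion (fun k => hmeas k _ hT) (hdisj' _)]
  have h3 : ∀ T : Set ℝ, ∫⁻ t in T, (∑' k, J k t) = ∑' k, ∫⁻ t in T, J k t := fun T =>
    lintegral_tsum fun k => (hJm k).aemeasurable
  refine ⟨fun t => ∑' k, J k t, Measurable.tsum hJm, fun t => ?_, fun t => ?_,
    fun T hT => ?_⟩
  · rw [h1, ← ENNReal.tsum_mul_left]
    exact ENNReal.tsum_le_tsum fun k => hJ1 k t
  · rw [h1, ← ENNReal.tsum_mul_left]
    exact ENNReal.tsum_le_tsum fun k => hJ2 k t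
  · rw [h2 T hT, h3, ← ENNReal.tsum_mul_left, ← ENNReal.tsum_mul_left]
    exact ⟨ENNReal.tsum_le_tsum fun k => (hJ3 k T hT).1,
      ENNReal.tsum_le_tsum fun k => (hJ3 k T hT).2⟩

/-! ### Coarea comparison on an open set -/

lemma norm_le_of_coord {m : ℕ} (L : EuclideanSpace ℝ (Fin (m + 1)) →L[ℝ] ℝ) {a : ℝ}
    (ha0 : 0 ≤ a) (hmax : ∀ j, |L (EuclideanSpace.single j 1)| ≤ a) : ‖L‖ ≤ (m + 1) * a := by
  refine L.opNorm_le_bound (by positivity) fun v => ?_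
  have h1 : L v = ∑ j, v j * L (EuclideanSpace.single j 1) := by
    conv_lhs => rw [← (EuclideanSpace.basisFun (Fin (m + 1)) ℝ).sum_repr v]
    simp
  have : ∀ j ∈ Finset.univ, |v j * L (EuclideanSpace.single j 1)| ≤ ‖v‖ * a := fun j _ => by
    rw [abs_mul]
    gcongr
    · exact PiLp.norm_apply_le v j
    · exact hmax _
  have h2 := Finset.sum_le_card_nsmul _ _ _ this
  rw [Finset.card_univ, Fintype.card_fin, nsmul_eq_mul] at h2
  rw [h1, Real.norm_eq_abs]
  refine (Finset.abs_sum_le_sum_abs _ _).trans (h2.trans (le_of_eq ?_))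
  push_cast; ring

lemma norm_gradient_eq {n : ℕ} (G : EuclideanSpace ℝ (Fin n) → ℝ) (x : EuclideanSpace ℝ (Fin n)) :
    ‖gradient G x‖ = ‖fderiv ℝ G x‖ := by
  simp [gradient]

lemma continuousOn_gradient {n : ℕ} {Ω : Set (EuclideanSpace ℝ (Fin n))} (hΩ : IsOpen Ω)
    {G : EuclideanSpace ℝ (Fin n) → ℝ} (hG : ContDiffOn ℝ 1 G Ω) :
    ContinuousOn (gradient G) Ω := by
  have h := hG.continuousOn_fderiv_of_isOpen hΩ le_rfl
  exact (LinearIsometryEquiv.continuous _).comp_continuousOn h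

open scoped Classical in
/-- The coarea integrand `g / |∇G|`, set to `0` at critical points of `G`. -/
noncomputable def coareaDensity {n : ℕ} (G g : EuclideanSpace ℝ (Fin n) → ℝ)
    (x : EuclideanSpace ℝ (Fin n)) : ℝ :=
  if gradient G x = 0 then 0 else g x / ‖gradient G x‖

/-- Around a regular point of `G` the comparison holds with a factor depending only on the
dimension, `i` being the index of the largest partial derivative at the centre. -/
lemma exists_ball_coareaComparable {m : ℕ} {Ω : Set (EuclideanSpace ℝ (Fin (m + 1)))}
    (hΩ : IsOpen Ω) {G : EuclideanSpace ℝ (Fin (m + 1)) → ℝ} (hG : ContDiffOn ℝ 1 G Ω)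
    (g : EuclideanSpace ℝ (Fin (m + 1)) → ℝ) (hg : ContinuousOn g Ω)
    {x₀ : EuclideanSpace ℝ (Fin (m + 1))} (hx₀ : x₀ ∈ Ω) (hgrad : gradient G x₀ ≠ 0)
    (hgpos : 0 < g x₀) :
    ∃ r > 0, Metric.ball x₀ r ⊆ Ω ∧ ∀ E, MeasurableSet E → E ⊆ Metric.ball x₀ r →
      CoareaComparable ((2 * (m + 2)) * (1 + (4 * m) ^ m)) G
        (fun x => ENNReal.ofReal (coareaDensity G g x)) (fun x => ENNReal.ofReal (g x)) E := by
  obtain ⟨i, hi⟩ := Finite.exists_max fun j => |fderiv ℝ G x₀ (EuclideanSpace.single j 1)|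
  set a := |fderiv ℝ G x₀ (EuclideanSpace.single i 1)| with ha
  have hN2 := norm_le_of_coord _ (abs_nonneg _) hi
  have hL0 : 0 < ‖fderiv ℝ G x₀‖ := by
    rw [← norm_gradient_eq]; exact norm_pos_iff.2 hgrad
  have ha0 : 0 < a := by
    by_contra h
    have : a = 0 := le_antisymm (not_lt.1 h) (abs_nonneg _)
    rw [← ha, this, mul_zero] at hN2
    linarith
  have hN1 : a ≤ ‖fderiv ℝ G x₀‖ := by
    simpa using (fderiv ℝ G x₀).le_opNorm (EuclideanSpace.single i 1)
  have hΩn := hΩ.mem_nhds hx₀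
  have hc1 : ContinuousAt (fderiv ℝ G) x₀ :=
    (hG.continuousOn_fderiv_of_isOpen hΩ le_rfl).continuousAt hΩn
  have hc2 : ContinuousAt g x₀ := hg.continuousAt hΩn
  have e1 : ∀ᶠ x in 𝓝 x₀, ‖fderiv ℝ G x - fderiv ℝ G x₀‖ < a / 2 := by
    have := hc1.eventually (Metric.ball_mem_nhds _ (half_pos ha0))
    filter_upwards [this] with x hx
    rwa [← dist_eq_norm]
  have e2 : ∀ᶠ x in 𝓝 x₀, g x₀ / 2 < g x := hc2.eventually (lt_mem_nhds (by linarith))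
  have e3 : ∀ᶠ x in 𝓝 x₀, g x < 2 * g x₀ := hc2.eventually (gt_mem_nhds (by linarith))
  obtain ⟨r, hr, hball⟩ := Metric.eventually_nhds_iff_ball.1 (e1.and (e2.and (e3.and hΩn)))
  refine ⟨r, hr, fun x hx => (hball x hx).2.2.2, fun E hE hEB => ?_⟩
  have hdiff : ∀ x ∈ Metric.ball x₀ r, DifferentiableAt ℝ G x := fun x hx =>
    (hG.differentiableOn one_ne_zero).differentiableAt (hΩ.mem_nhds (hball x hx).2.2.2)
  have hpt : ∀ x ∈ Metric.ball x₀ r,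
      coareaDensity G g x = g x / ‖fderiv ℝ G x‖ ∧
      a / 2 ≤ ‖fderiv ℝ G x‖ ∧ ‖fderiv ℝ G x‖ ≤ (m + 2) * a ∧
      a / 2 ≤ |fderiv ℝ G x (EuclideanSpace.single i 1)| ∧
      |fderiv ℝ G x (EuclideanSpace.single i 1)| ≤ 3 * a / 2 := by
    intro x hx
    have h1 := (hball x hx).1
    have h2 := norm_sub_norm_le (fderiv ℝ G x) (fderiv ℝ G x₀)
    have h3 := norm_sub_norm_le (fderiv ℝ G x₀) (fderiv ℝ G x)
    rw [norm_sub_rev] at h3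
    have h4 : |fderiv ℝ G x (EuclideanSpace.single i 1) -
        fderiv ℝ G x₀ (EuclideanSpace.single i 1)| ≤ a / 2 := by
      have := (fderiv ℝ G x - fderiv ℝ G x₀).le_opNorm (EuclideanSpace.single i 1)
      simp only [PiLp.norm_single, norm_one, mul_one] at this
      exact this.trans h1.le
    have h5 := abs_sub_abs_le_abs_sub (fderiv ℝ G x (EuclideanSpace.single i 1))
        (fderiv ℝ G x₀ (EuclideanSpace.single i 1))
    have h6 := abs_sub_abs_le_abs_sub (fderiv ℝ G x₀ (EuclideanSpace.single i 1))
      (fderiv ℝ G x (EuclideanSpace.single i 1))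
    rw [abs_sub_comm] at h6
    rw [← ha] at h5 h6
    have h7 : a / 2 ≤ ‖fderiv ℝ G x‖ := by linarith
    have h8 : gradient G x ≠ 0 := by
      rw [← norm_pos_iff, norm_gradient_eq]; linarith
    rw [coareaDensity, if_neg h8, norm_gradient_eq]
    exact ⟨rfl, h7, by nlinarith, by linarith, by linarith⟩
  have hco : ((2 * (m + 2) : ℝ≥0) : ℝ≥0∞) = ENNReal.ofReal (2 * (m + 2)) := by
    rw [ENNReal.ofReal, Real.toNNReal_of_nonneg (by positivity)]
    norm_cast
  have hm0 : (0 : ℝ) ≤ m := Nat.cast_nonneg m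
  refine coareaComparable_local i ha0 hdiff (fun x hx => (hball x hx).1.le) ha.symm hi _ _
    (ENNReal.ofReal (g x₀ / a)) _ ?_ ?_ ENNReal.ofReal_ne_top ?_ ?_ hE hEB
  · intro x hx
    obtain ⟨h1, h2, h3, h4, h5⟩ := hpt x hx
    rw [hco, ← ENNReal.ofReal_mul (by positivity), h1]
    refine ENNReal.ofReal_le_ofReal ?_
    have hpos : 0 < ‖fderiv ℝ G x‖ := by linarith
    have := (hball x hx).2.1
    rw [← mul_div_assoc, div_le_div_iff₀ ha0 hpos]
    calc g x₀ * ‖fderiv ℝ G x‖ ≤ (2 * g x) * ((m + 2) * a) := by gcongr <;> linarith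
      _ = _ := by ring
  · intro x hx
    obtain ⟨h1, h2, h3, h4, h5⟩ := hpt x hx
    rw [hco, ← ENNReal.ofReal_mul (by positivity), h1]
    refine ENNReal.ofReal_le_ofReal ?_
    have hpos : 0 < ‖fderiv ℝ G x‖ := by linarith
    have := (hball x hx).2.2.1
    rw [← mul_div_assoc, div_le_div_iff₀ hpos ha0]
    calc g x * a ≤ (2 * g x₀) * (2 * ‖fderiv ℝ G x‖) := by gcongr; linarith
      _ ≤ (2 * (m + 2) * g x₀) * ‖fderiv ℝ G x‖ := by
        have : 0 ≤ m * (g x₀ * ‖fderiv ℝ G x‖) := by positivity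
        nlinarith
  · intro x hx
    obtain ⟨h1, h2, h3, h4, h5⟩ := hpt x hx
    rw [hco, ← ENNReal.ofReal_mul (by positivity), ← ENNReal.ofReal_mul (by positivity)]
    refine ENNReal.ofReal_le_ofReal ?_
    have := (hball x hx).2.1
    calc g x₀ / a * |fderiv ℝ G x (EuclideanSpace.single i 1)|
        ≤ g x₀ / a * (3 * a / 2) := by gcongr
      _ = 3 * g x₀ / 2 := by field_simp
      _ ≤ 2 * (m + 2) * g x := by nlinarith
  · intro x hx
    obtain ⟨h1, h2, h3, h4, h5⟩ := hpt x hx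
    rw [hco, ← ENNReal.ofReal_mul (by positivity), ← ENNReal.ofReal_mul (by positivity)]
    refine ENNReal.ofReal_le_ofReal ?_
    have := (hball x hx).2.2.1
    calc g x ≤ 2 * (m + 2) * (g x₀ / 2) := by nlinarith
      _ = 2 * (m + 2) * (g x₀ / a * (a / 2)) := by field_simp
      _ ≤ _ := by gcongr

/-- The comparison on all of `Ω`: the regular points are partitioned into countably many pieces
lying in good balls, and critical points contribute to neither side. -/
lemma exists_coareaComparable {m : ℕ} {Ω : Set (EuclideanSpace ℝ (Fin (m + 1)))}
    (hΩ : IsOpen Ω) {G : EuclideanSpace ℝ (Fin (m + 1)) → ℝ} (hG : ContDiffOn ℝ 1 G Ω)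
    (g : EuclideanSpace ℝ (Fin (m + 1)) → ℝ) (hg : ContinuousOn g Ω)
    (hgpos : ∀ x ∈ Ω, gradient G x ≠ 0 → 0 < g x) (hg0 : ∀ x ∈ Ω, gradient G x = 0 → g x = 0) :
    ∃ D : ℝ≥0, CoareaComparable D G
        (fun x => ENNReal.ofReal (coareaDensity G g x)) (fun x => ENNReal.ofReal (g x)) Ω := by
  refine ⟨(2 * (m + 2)) * (1 + (4 * m) ^ m), ?_⟩
  set D : ℝ≥0 := (2 * (m + 2)) * (1 + (4 * m) ^ m)
  set U := {x ∈ Ω | gradient G x ≠ 0} with hU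
  have hUo : IsOpen U :=
    (continuousOn_gradient hΩ hG).isOpen_inter_preimage hΩ isOpen_compl_singleton
  have hmeas : ∀ E ⊆ Ω, MeasurableSet E → ∀ T, MeasurableSet T → MeasurableSet (E ∩ G ⁻¹' T) :=
    fun E hE hEm T hT => measurableSet_inter_preimage_of_continuousOn hΩ hG.continuousOn hE hEm hT
  have hUcc : CoareaComparable D G (fun x => ENNReal.ofReal (coareaDensity G g x))
      (fun x => ENNReal.ofReal (g x)) U := by
    rcases U.eq_empty_or_nonempty with h | hne
    · rw [h]
      exact ⟨fun _ => 0, measurable_const, by simp, by simp, by simp⟩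
    have hloc : ∀ x ∈ U, ∃ r > 0, Metric.ball x r ⊆ Ω ∧ ∀ E, MeasurableSet E →
        E ⊆ Metric.ball x r → CoareaComparable D G
          (fun x => ENNReal.ofReal (coareaDensity G g x)) (fun x => ENNReal.ofReal (g x)) E :=
      fun x hx => exists_ball_coareaComparable hΩ hG g hg hx.1 hx.2 (hgpos x hx.1 hx.2)
    choose! r hr hrΩ hrE using hloc
    obtain ⟨s, hsU, hsc, hsub⟩ := TopologicalSpace.countable_cover_nhdsWithin
      (f := fun x => Metric.ball x (r x)) (s := U)
      (fun x hx => mem_nhdsWithin_of_mem_nhds (Metric.ball_mem_nhds x (hr x hx)))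
    have hsne : s.Nonempty := by
      by_contra h
      rw [not_nonempty_iff_eq_empty] at h
      obtain ⟨x, hx⟩ := hne
      simpa [h] using hsub hx
    obtain ⟨u, hu⟩ := hsc.exists_eq_range hsne
    have huU : ∀ k, u k ∈ U := fun k => hsU (hu ▸ mem_range_self k)
    set E : ℕ → Set (EuclideanSpace ℝ (Fin (m + 1))) :=
      disjointed fun k => U ∩ Metric.ball (u k) (r (u k)) with hEdef
    have hEm : ∀ k, MeasurableSet (E k) := fun k =>
      MeasurableSet.disjointed (fun k => hUo.measurableSet.inter measurableSet_ball) k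
    have hEs : ∀ k, E k ⊆ U ∩ Metric.ball (u k) (r (u k)) := fun k => disjointed_subset _ k
    have hEU : (⋃ k, E k) = U := by
      rw [hEdef, iUnion_disjointed, ← inter_iUnion, inter_eq_left]
      intro x hx
      have := hsub hx
      rw [hu] at this
      simpa using this
    rw [← hEU]
    refine CoareaComparable.iUnion (fun k => hrE _ (huU k) _ (hEm k)
      ((hEs k).trans inter_subset_right)) (disjoint_disjointed _) fun k => hmeas _ ?_ (hEm k)
    exact fun x hx => (hEs k hx).1.1
  -- Both integrands vanish on `Ω \ U`, so nothing changes when passing from `U` to `Ω`.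
  have hUΩ : ∀ T, U ∩ G ⁻¹' T ⊆ Ω ∩ G ⁻¹' T := fun T x hx => ⟨hx.1.1, hx.2⟩
  have hrest : ∀ (ν : Measure (EuclideanSpace ℝ (Fin (m + 1))))
      (F : EuclideanSpace ℝ (Fin (m + 1)) → ℝ≥0∞) T, MeasurableSet T →
      (∀ x ∈ Ω, gradient G x = 0 → F x = 0) →
      ∫⁻ x in Ω ∩ G ⁻¹' T, F x ∂ν = ∫⁻ x in U ∩ G ⁻¹' T, F x ∂ν := by
    intro ν F T hT hF
    rw [← lintegral_indicator (hmeas Ω subset_rfl hΩ.measurableSet T hT),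
      ← lintegral_indicator (hmeas U (fun x hx => hx.1) hUo.measurableSet T hT)]
    congr 1
    ext x
    by_cases hx : x ∈ U ∩ G ⁻¹' T
    · rw [indicator_of_mem hx, indicator_of_mem (hUΩ T hx)]
    · rw [indicator_of_notMem hx]
      refine indicator_apply_eq_zero.2 fun h => ?_
      refine hF x h.1 ?_
      by_contra h'
      exact hx ⟨⟨h.1, h'⟩, h.2⟩
  obtain ⟨J, hJm, h1, h2, h3⟩ := hUcc
  have hf0 : ∀ x ∈ Ω, gradient G x = 0 → ENNReal.ofReal (coareaDensity G g x) = 0 := by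
    intro x _ hx; simp [coareaDensity, hx]
  have hg0' : ∀ x ∈ Ω, gradient G x = 0 → ENNReal.ofReal (g x) = 0 := by
    intro x hx h; simp [hg0 x hx h]
  refine ⟨J, hJm, fun t => ?_, fun t => ?_, fun T hT => ?_⟩
  · rw [hrest _ _ _ (measurableSet_singleton t) hf0]; exact h1 t
  · rw [hrest _ _ _ (measurableSet_singleton t) hf0]; exact h2 t
  · rw [hrest _ _ _ hT hg0']; exact h3 T hT

/-! ### Mollification -/

open scoped Convolution in
/-- Mollification: a compactly supported `C¹` function is a limit of test functions, with
pointwise convergence and uniform bounds for values and gradients, and supports in a fixed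
compact set. -/
lemma exists_testFun_approx {n : ℕ} {U : Set (EuclideanSpace ℝ (Fin n))} (hU : IsOpen U)
    {ψ : EuclideanSpace ℝ (Fin n) → ℝ} (hψ : ContDiff ℝ 1 ψ) (hψc : HasCompactSupport ψ)
    (hψU : tsupport ψ ⊆ U) :
    ∃ (ψs : ℕ → EuclideanSpace ℝ (Fin n) → ℝ) (K : Set (EuclideanSpace ℝ (Fin n))) (C : ℝ),
      IsCompact K ∧ K ⊆ U ∧ (∀ k, IsTestFun U (ψs k)) ∧ (∀ k, tsupport (ψs k) ⊆ K) ∧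
      (∀ k x, |ψs k x| ≤ C) ∧ (∀ k x, ‖gradient (ψs k) x‖ ≤ C) ∧
      (∀ x, Tendsto (fun k => ψs k x) atTop (𝓝 (ψ x))) ∧
      (∀ x, Tendsto (fun k => gradient (ψs k) x) atTop (𝓝 (gradient ψ x))) := by
  obtain ⟨δ, hδ, hδU⟩ := hψc.isCompact.exists_cthickening_subset_open hU hψU
  let b : ℕ → ContDiffBump (0 : EuclideanSpace ℝ (Fin n)) := fun k =>
    { rIn := δ / (k + 2) / 2
      rOut := δ / (k + 2)
      rIn_pos := by positivity
      rIn_lt_rOut := half_lt_self (by positivity) }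
  have hbk : ∀ k, (b k).rOut = δ / (k + 2) := fun k => rfl
  have hb0 : Tendsto (fun k => (b k).rOut) atTop (𝓝 0) := by
    simp_rw [hbk]
    refine Tendsto.div_atTop tendsto_const_nhds ?_
    exact tendsto_atTop_add_const_right _ _ tendsto_natCast_atTop_atTop
  have hbδ : ∀ k, (b k).rOut ≤ δ := fun k => by
    rw [hbk]
    exact div_le_self hδ.le (by have : (0 : ℝ) ≤ k := Nat.cast_nonneg k; linarith)
  let ψs : ℕ → EuclideanSpace ℝ (Fin n) → ℝ := fun k =>
    ((b k).normed volume ⋆[ContinuousLinearMap.lsmul ℝ ℝ, volume] ψ)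
  have hdcont : Continuous (fderiv ℝ ψ) := hψ.continuous_fderiv one_ne_zero
  have hfd : ∀ k x, fderiv ℝ (ψs k) x =
      ((b k).normed volume ⋆[ContinuousLinearMap.lsmul ℝ ℝ, volume] fderiv ℝ ψ) x := by
    intro k x
    have := hψc.hasFDerivAt_convolution_right (ContinuousLinearMap.lsmul ℝ ℝ)
      (μ := volume) (f := (b k).normed volume)
      ((b k).continuous_normed.locallyIntegrable) hψ x
    exact this.fderiv
  obtain ⟨C1, hC1⟩ := hψc.exists_bound_of_continuous hψ.continuous
  obtain ⟨C2, hC2⟩ := (hψc.fderiv ℝ).exists_bound_of_continuous hdcont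
  have hC10 : 0 ≤ C1 := (norm_nonneg _).trans (hC1 0)
  have hC20 : 0 ≤ C2 := (norm_nonneg _).trans (hC2 0)
  have hts : ∀ k, tsupport (ψs k) ⊆ Metric.cthickening δ (tsupport ψ) := by
    intro k
    refine closure_minimal ?_ Metric.isClosed_cthickening
    refine (support_convolution_subset _).trans ?_
    rintro _ ⟨y, hy, z, hz, rfl⟩
    rw [(b k).support_normed_eq, mem_ball_zero_iff] at hy
    refine Metric.mem_cthickening_of_dist_le _ z _ _ (subset_tsupport _ hz) ?_
    simpa [dist_eq_norm] using hy.le.trans (hbδ k)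
  have hK : IsCompact (Metric.cthickening δ (tsupport ψ)) := hψc.isCompact.cthickening
  have hbd : ∀ {F : Type} [NormedAddCommGroup F] [NormedSpace ℝ F] [CompleteSpace F]
      (h : EuclideanSpace ℝ (Fin n) → F) (C : ℝ), Continuous h → (∀ x, ‖h x‖ ≤ C) → ∀ k x,
      ‖((b k).normed volume ⋆[ContinuousLinearMap.lsmul ℝ ℝ, volume] h) x‖ ≤ 3 * C := by
    intro F _ _ _ h C hc hC k x
    have h1 := (b k).dist_normed_convolution_le (μ := volume) (g := h) (x₀ := x) (ε := 2 * C)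
      hc.aestronglyMeasurable (fun y _ => by
        rw [dist_eq_norm]
        linarith [norm_sub_le (h y) (h x), hC x, hC y])
    rw [dist_eq_norm] at h1
    have h2 := norm_sub_norm_le
      (((b k).normed volume ⋆[ContinuousLinearMap.lsmul ℝ ℝ, volume] h) x) (h x)
    linarith [hC x]
  refine ⟨ψs, Metric.cthickening δ (tsupport ψ), 3 * C1 + 3 * C2, hK, hδU, fun k => ⟨?_, ?_, ?_⟩,
    hts, fun k x => ?_, fun k x => ?_, fun x => ?_, fun x => ?_⟩
  · exact (b k).hasCompactSupport_normed.contDiff_convolution_left _ (b k).contDiff_normed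
      hψ.continuous.locallyIntegrable
  · exact hK.of_isClosed_subset (isClosed_tsupport _) (hts k)
  · exact (hts k).trans hδU
  · have := hbd ψ C1 hψ.continuous hC1 k x
    rw [Real.norm_eq_abs] at this
    linarith
  · rw [norm_gradient_eq, hfd]
    linarith [hbd (fderiv ℝ ψ) C2 hdcont hC2 k x]
  · exact ContDiffBump.convolution_tendsto_right_of_continuous hb0 hψ.continuous x
  · unfold gradient
    refine ((LinearIsometryEquiv.continuous _).tendsto _).comp ?_
    simp_rw [hfd]
    exact ContDiffBump.convolution_tendsto_right_of_continuous hb0 hdcont x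

/-! ### Testing the equation with functions of `G` -/

lemma aInner_self_nonneg {n : ℕ} {Ω : Set (EuclideanSpace ℝ (Fin n))}
    {A : EuclideanSpace ℝ (Fin n) → Matrix (Fin n) (Fin n) ℝ} (hA : IsEllipticMatrix Ω A)
    {x : EuclideanSpace ℝ (Fin n)} (hx : x ∈ Ω) (ξ : EuclideanSpace ℝ (Fin n)) :
    0 ≤ aInner A x ξ ξ := by
  rcases eq_or_ne ξ 0 with rfl | h
  · simp [aInner]
  · exact (hA.posdef x hx ξ h).le

lemma IsEllipticMatrix.continuousOn {n : ℕ} {Ω : Set (EuclideanSpace ℝ (Fin n))} (hΩ : IsOpen Ω)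
    {A : EuclideanSpace ℝ (Fin n) → Matrix (Fin n) (Fin n) ℝ} (hA : IsEllipticMatrix Ω A)
    (i j : Fin n) : ContinuousOn (fun x => A x i j) Ω := by
  intro x hx
  obtain ⟨r, hr, hrΩ⟩ := Metric.nhds_basis_closedBall.mem_iff.1 (hΩ.mem_nhds hx)
  obtain ⟨C, hC, β, hβ, h⟩ := hA.locHolder _ hrΩ (isCompact_closedBall x r)
  refine ContinuousAt.continuousWithinAt ?_
  rw [ContinuousAt, tendsto_iff_dist_tendsto_zero]
  have hlim : Tendsto (fun y => C * dist y x ^ β) (𝓝 x) (𝓝 0) := by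
    have : Continuous fun y => C * dist y x ^ β :=
      continuous_const.mul ((continuous_id.dist continuous_const).rpow_const
        fun _ => Or.inr hβ.1.le)
    have h0 := this.tendsto x
    simpa [Real.zero_rpow hβ.1.ne'] using h0
  refine squeeze_zero' (Eventually.of_forall fun _ => dist_nonneg) ?_ hlim
  filter_upwards [Metric.closedBall_mem_nhds x hr] with y hy
  rw [Real.dist_eq]
  exact h y hy x (Metric.mem_closedBall_self hr.le) i j

lemma continuousOn_aInner {n : ℕ} {Ω : Set (EuclideanSpace ℝ (Fin n))} (hΩ : IsOpen Ω)
    {A : EuclideanSpace ℝ (Fin n) → Matrix (Fin n) (Fin n) ℝ} (hA : IsEllipticMatrix Ω A)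
    {X Y : EuclideanSpace ℝ (Fin n) → EuclideanSpace ℝ (Fin n)} (hX : ContinuousOn X Ω)
    (hY : ContinuousOn Y Ω) : ContinuousOn (fun x => aInner A x (X x) (Y x)) Ω := by
  have hc : ∀ i : Fin n, Continuous fun v : EuclideanSpace ℝ (Fin n) => v i := fun i =>
    (EuclideanSpace.proj i : EuclideanSpace ℝ (Fin n) →L[ℝ] ℝ).continuous
  refine continuousOn_finsetSum _ fun i _ => continuousOn_finsetSum _ fun j _ => ?_
  exact ((hA.continuousOn hΩ i j).mul ((hc j).comp_continuousOn hX)).mul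
    ((hc i).comp_continuousOn hY)

/-- The flux `|∇G|_A^{p-2} A∇G` is bounded on compact sets, also for `p < 2`, where the first factor
may be singular at critical points. -/
lemma exists_flux_bound {n : ℕ} {Ω : Set (EuclideanSpace ℝ (Fin n))} (hΩ : IsOpen Ω)
    {p : ℝ} (hp : 1 < p) {A : EuclideanSpace ℝ (Fin n) → Matrix (Fin n) (Fin n) ℝ}
    (hA : IsEllipticMatrix Ω A) {G : EuclideanSpace ℝ (Fin n) → ℝ} (hG : ContDiffOn ℝ 1 G Ω)
    {K : Set (EuclideanSpace ℝ (Fin n))} (hK : IsCompact K) (hKΩ : K ⊆ Ω) :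
    ∃ B : ℝ, 0 ≤ B ∧ ∀ x ∈ K, ∀ η : EuclideanSpace ℝ (Fin n),
      |aNorm A x (gradient G x) ^ (p - 2) * aInner A x (gradient G x) η| ≤ B * ‖η‖ := by
  obtain ⟨Θ, hΘ, hell⟩ := hA.elliptic K hKΩ hK
  have hgr := continuousOn_gradient hΩ hG
  have hS : ContinuousOn (fun x => ∑ i, ∑ j, |A x i j|) Ω :=
    continuousOn_finsetSum _ fun i _ => continuousOn_finsetSum _ fun j _ =>
      (hA.continuousOn hΩ i j).abs
  obtain ⟨CA, hCA⟩ := hK.exists_bound_of_continuousOn (hS.mono hKΩ)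
  have hN : ContinuousOn (fun x => aNorm A x (gradient G x) ^ (p - 1)) Ω :=
    (continuousOn_aInner hΩ hA hgr hgr).sqrt.rpow_const fun x _ => Or.inr (by linarith)
  obtain ⟨CN, hCN⟩ := hK.exists_bound_of_continuousOn (hN.mono hKΩ)
  refine ⟨|CN| * (|CA| * √Θ), by positivity, fun x hx η => ?_⟩
  set ξ := gradient G x
  have h1 : |aInner A x ξ η| ≤ (∑ i, ∑ j, |A x i j|) * (‖ξ‖ * ‖η‖) := by
    rw [aInner, Finset.sum_mul]
    refine (Finset.abs_sum_le_sum_abs _ _).trans (Finset.sum_le_sum fun i _ => ?_)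
    rw [Finset.sum_mul]
    refine (Finset.abs_sum_le_sum_abs _ _).trans (Finset.sum_le_sum fun j _ => ?_)
    rw [abs_mul, abs_mul, mul_assoc]
    gcongr
    · exact PiLp.norm_apply_le ξ j
    · exact PiLp.norm_apply_le η i
  have h2 : ‖ξ‖ ≤ √Θ * aNorm A x ξ := by
    rw [aNorm, ← Real.sqrt_mul hΘ.le]
    refine Real.le_sqrt_of_sq_le ?_
    have := (hell x hx ξ).1
    rw [inv_mul_le_iff₀ hΘ] at this
    exact this
  have h3 : (∑ i, ∑ j, |A x i j|) ≤ |CA| := ((le_abs_self _).trans (hCA x hx)).trans (le_abs_self _)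
  have h4 : aNorm A x ξ ^ (p - 1) ≤ |CN| := ((le_abs_self _).trans (hCN x hx)).trans (le_abs_self _)
  have hN0 : 0 ≤ aNorm A x ξ := Real.sqrt_nonneg _
  rw [abs_mul, abs_of_nonneg (Real.rpow_nonneg hN0 _)]
  rcases hN0.eq_or_lt with h0 | hpos
  · rw [← h0, mul_zero] at h2
    have hξ : ξ = 0 := norm_le_zero_iff.1 h2
    have : aInner A x ξ η = 0 := by simp [aInner, hξ]
    rw [this, abs_zero, mul_zero]
    positivity
  · calc aNorm A x ξ ^ (p - 2) * |aInner A x ξ η|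
        ≤ aNorm A x ξ ^ (p - 2) * (|CA| * ((√Θ * aNorm A x ξ) * ‖η‖)) := by
          gcongr
          exact h1.trans (by gcongr)
      _ = (aNorm A x ξ ^ (p - 2) * aNorm A x ξ) * (|CA| * √Θ) * ‖η‖ := by ring
      _ = aNorm A x ξ ^ (p - 1) * (|CA| * √Θ) * ‖η‖ := by
          rw [show p - 1 = (p - 2) + 1 by ring, Real.rpow_add_one hpos.ne']
      _ ≤ _ := by gcongr

/-- The weak formulation extends from smooth to `C¹` compactly supported test functions. -/
lemma IsWeakSolution.of_contDiff_one {n : ℕ} {Ω : Set (EuclideanSpace ℝ (Fin n))} (hΩ : IsOpen Ω)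
    {p : ℝ} (hp : 1 < p) {A : EuclideanSpace ℝ (Fin n) → Matrix (Fin n) (Fin n) ℝ}
    (hA : IsEllipticMatrix Ω A) {V φ G : EuclideanSpace ℝ (Fin n) → ℝ} (hG : ContDiffOn ℝ 1 G Ω)
    (hsol : IsWeakSolution A p V φ Ω G) (hφ : IntegrableOn φ Ω)
    (hVG : IntegrableOn (fun x => V x * G x ^ (p - 1)) Ω)
    {ψ : EuclideanSpace ℝ (Fin n) → ℝ} (hψ : ContDiff ℝ 1 ψ) (hψc : HasCompactSupport ψ)
    (hψU : tsupport ψ ⊆ Ω) :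
    (∫ x in Ω, (aNorm A x (gradient G x)) ^ (p - 2) *
        aInner A x (gradient G x) (gradient ψ x))
      + (∫ x in Ω, V x * G x ^ (p - 1) * ψ x) = ∫ x in Ω, φ x * ψ x := by
  obtain ⟨ψs, K, C, hK, hKΩ, htest, htsK, hC1, hC2, hlim, hlimg⟩ :=
    exists_testFun_approx hΩ hψ hψc hψU
  obtain ⟨B, hB0, hB⟩ := exists_flux_bound hΩ hp hA hG hK hKΩ
  have hgr := continuousOn_gradient hΩ hG
  have L1 : Tendsto (fun k => ∫ x in Ω, (aNorm A x (gradient G x)) ^ (p - 2) *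
        aInner A x (gradient G x) (gradient (ψs k) x)) atTop
      (𝓝 (∫ x in Ω, (aNorm A x (gradient G x)) ^ (p - 2) *
        aInner A x (gradient G x) (gradient ψ x))) := by
    refine tendsto_integral_of_dominated_convergence (K.indicator fun _ => B * C) ?_ ?_ ?_ ?_
    · intro k
      refine AEStronglyMeasurable.mul ?_ ?_
      · exact (((continuousOn_aInner hΩ hA hgr hgr).sqrt.aemeasurable
          hΩ.measurableSet).pow_const _).aestronglyMeasurable
      · refine (continuousOn_aInner hΩ hA hgr ?_).aestronglyMeasurable hΩ.measurableSet
        exact continuousOn_gradient hΩ ((htest k).1.of_le (by exact_mod_cast le_top)).contDiffOn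
    · refine Integrable.mono_measure ?_ Measure.restrict_le_self
      rw [integrable_indicator_iff hK.measurableSet]
      exact integrableOn_const hK.measure_lt_top.ne
    · intro k
      refine Eventually.of_forall fun x => ?_
      by_cases hx : x ∈ K
      · rw [indicator_of_mem hx, Real.norm_eq_abs]
        exact (hB x hx _).trans (by gcongr; exact hC2 k x)
      · have : gradient (ψs k) x = 0 := by
          rw [gradient, fderiv_of_notMem_tsupport ℝ (fun h => hx (htsK k h)), map_zero]
        rw [indicator_of_notMem hx, this]
        simp [aInner]
    · refine Eventually.of_forall fun x => ?_
      refine Tendsto.const_mul _ ?_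
      have hc : Continuous fun η : EuclideanSpace ℝ (Fin n) => aInner A x (gradient G x) η := by
        unfold aInner
        fun_prop
      exact (hc.tendsto _).comp (hlimg x)
  have L0 : ∀ w : EuclideanSpace ℝ (Fin n) → ℝ, IntegrableOn w Ω →
      Tendsto (fun k => ∫ x in Ω, w x * ψs k x) atTop (𝓝 (∫ x in Ω, w x * ψ x)) := by
    intro w hw
    refine tendsto_integral_of_dominated_convergence (fun x => |w x| * C) ?_ ?_ ?_ ?_
    · exact fun k => hw.aestronglyMeasurable.mul (htest k).1.continuous.aestronglyMeasurable
    · exact hw.abs.mul_const C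
    · intro k
      refine Eventually.of_forall fun x => ?_
      rw [norm_mul]
      exact mul_le_mul_of_nonneg_left (hC1 k x) (norm_nonneg _)
    · exact Eventually.of_forall fun x => (hlim x).const_mul _
  refine tendsto_nhds_unique (L1.add (L0 _ hVG)) ?_
  refine (L0 φ hφ).congr fun k => ?_
  exact (hsol (ψs k) (htest k)).symm

lemma isCompact_superlevel {n : ℕ} {Ω : Set (EuclideanSpace ℝ (Fin n))}
    {G : EuclideanSpace ℝ (Fin n) → ℝ} (hG : ContinuousOn G Ω)
    (hinf : TendstoZeroAtInfinityIn Ω Ω G) {a : ℝ} (ha : 0 < a) :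
    IsCompact {x ∈ Ω | a ≤ G x} := by
  obtain ⟨K, hKΩ, hK, h⟩ := hinf a ha
  have : {x ∈ Ω | a ≤ G x} = K ∩ G ⁻¹' Ici a := by
    ext x
    constructor
    · rintro ⟨hx, hxa⟩
      refine ⟨?_, hxa⟩
      by_contra hxK
      exact absurd (h x ⟨hx, hxK⟩) (not_lt.2 hxa)
    · rintro ⟨hx, hxa⟩
      exact ⟨hKΩ hx, hxa⟩
  rw [this]
  exact hK.of_isClosed_subset
    ((hG.mono hKΩ).preimage_isClosed_of_isClosed hK.isClosed isClosed_Ici) inter_subset_left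

/-- Testing the equation with `h ∘ G`, where `h' = k` vanishes below a positive level. -/
lemma integral_comp_level {n : ℕ} {Ω : Set (EuclideanSpace ℝ (Fin n))} (hΩ : IsOpen Ω)
    {p : ℝ} (hp : 1 < p) {A : EuclideanSpace ℝ (Fin n) → Matrix (Fin n) (Fin n) ℝ}
    (hA : IsEllipticMatrix Ω A) {V φ G : EuclideanSpace ℝ (Fin n) → ℝ} (hG : ContDiffOn ℝ 1 G Ω)
    (hsol : IsWeakSolution A p V φ Ω G) (hφ : IntegrableOn φ Ω)
    (hVG : IntegrableOn (fun x => V x * G x ^ (p - 1)) Ω)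
    (hinf : TendstoZeroAtInfinityIn Ω Ω G)
    {k : ℝ → ℝ} (hk : Continuous k) {a : ℝ} (ha : 0 < a) (hka : ∀ s ≤ a, k s = 0) :
    (∫ x in Ω, k (G x) * aNorm A x (gradient G x) ^ p)
      + (∫ x in Ω, V x * G x ^ (p - 1) * ∫ s in (0)..(G x), k s)
      = ∫ x in Ω, φ x * ∫ s in (0)..(G x), k s := by
  set h : ℝ → ℝ := fun y => ∫ s in (0)..y, k s with hh
  have hderiv : ∀ y, HasDerivAt h (k y) y := fun y =>
    intervalIntegral.integral_hasDerivAt_right (hk.intervalIntegrable _ _)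
      (hk.stronglyMeasurableAtFilter _ _) hk.continuousAt
  have hhC : ContDiff ℝ 1 h := by
    rw [contDiff_one_iff_deriv]
    refine ⟨fun y => (hderiv y).differentiableAt, ?_⟩
    rwa [show deriv h = k from funext fun y => (hderiv y).deriv]
  have hh0 : ∀ y ≤ a, h y = 0 := by
    intro y hy
    refine intervalIntegral.integral_zero_ae (Eventually.of_forall fun s hs => hka s ?_)
    exact hs.2.trans (max_le ha.le hy)
  set ψ : EuclideanSpace ℝ (Fin n) → ℝ := Ω.indicator fun x => h (G x) with hψ
  have hKc := isCompact_superlevel hG.continuousOn hinf ha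
  have hsupp : Function.support ψ ⊆ {x ∈ Ω | a ≤ G x} := by
    intro x hx
    have hxΩ : x ∈ Ω := by
      by_contra h'
      exact hx (indicator_of_notMem h' _)
    refine ⟨hxΩ, ?_⟩
    by_contra h'
    refine hx ?_
    rw [hψ, indicator_of_mem hxΩ]
    exact hh0 _ (not_le.1 h').le
  have hts : tsupport ψ ⊆ {x ∈ Ω | a ≤ G x} := closure_minimal hsupp hKc.isClosed
  have heq : ∀ x ∈ Ω, ψ =ᶠ[𝓝 x] fun x => h (G x) := fun x hx => by
    filter_upwards [hΩ.mem_nhds hx] with y hy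
    exact indicator_of_mem hy _
  have hψC : ContDiff ℝ 1 ψ := by
    rw [contDiff_iff_contDiffAt]
    intro x
    by_cases hx : x ∈ Ω
    · exact (hhC.contDiffAt.comp x (hG.contDiffAt (hΩ.mem_nhds hx))).congr_of_eventuallyEq
        (heq x hx)
    · have hx' : x ∉ tsupport ψ := fun h' => hx (hts h').1
      exact contDiffAt_const.congr_of_eventuallyEq (notMem_tsupport_iff_eventuallyEq.1 hx')
  have hψcs : HasCompactSupport ψ := hKc.of_isClosed_subset (isClosed_tsupport _) hts
  have key := hsol.of_contDiff_one hΩ hp hA hG hφ hVG hψC hψcs (hts.trans fun x hx => hx.1)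
  have e1 : ∫ x in Ω, (aNorm A x (gradient G x)) ^ (p - 2) *
        aInner A x (gradient G x) (gradient ψ x) =
      ∫ x in Ω, k (G x) * aNorm A x (gradient G x) ^ p := by
    refine setIntegral_congr_fun hΩ.measurableSet fun x hx => ?_
    have hGx : DifferentiableAt ℝ G x :=
      (hG.differentiableOn one_ne_zero).differentiableAt (hΩ.mem_nhds hx)
    have hgrad : gradient ψ x = k (G x) • gradient G x := by
      rw [gradient, (heq x hx).fderiv_eq]
      have := (hderiv (G x)).comp_hasFDerivAt x hGx.hasFDerivAt
      rw [show fderiv ℝ (fun x => h (G x)) x = k (G x) • fderiv ℝ G x from this.fderiv]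
      simp [gradient]
    set ξ := gradient G x
    have hin : aInner A x ξ (gradient ψ x) = k (G x) * aInner A x ξ ξ := by
      rw [hgrad, aInner, aInner, Finset.mul_sum]
      refine Finset.sum_congr rfl fun i _ => ?_
      rw [Finset.mul_sum]
      refine Finset.sum_congr rfl fun j _ => ?_
      simp
      ring
    have hsq : aInner A x ξ ξ = aNorm A x ξ ^ (2 : ℝ) := by
      rw [aNorm, Real.rpow_two, Real.sq_sqrt (aInner_self_nonneg hA hx ξ)]
    rw [hin, hsq]
    have hN0 : 0 ≤ aNorm A x ξ := Real.sqrt_nonneg _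
    rcases hN0.eq_or_lt with h0 | hpos
    · rw [← h0, Real.zero_rpow (by linarith : p ≠ 0), Real.zero_rpow two_ne_zero]
      ring
    · rw [mul_left_comm, ← Real.rpow_add hpos]
      ring_nf
  have e2 : ∀ w : EuclideanSpace ℝ (Fin n) → ℝ,
      ∫ x in Ω, w x * ψ x = ∫ x in Ω, w x * h (G x) := fun w =>
    setIntegral_congr_fun hΩ.measurableSet fun x hx => by
      simp only [hψ, indicator_of_mem hx]
  rw [e1, e2, e2] at key
  exact key

/-! ### Mass of level slabs -/

/-- Two finite Borel measures on `ℝ` are comparable on subsets of an open set `U` as soon as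
their integrals against nonnegative continuous functions vanishing off `U` are. -/
lemma measure_le_of_forall_continuous {μ ν : Measure ℝ} [IsFiniteMeasure μ] [IsFiniteMeasure ν]
    {U : Set ℝ} (hU : IsOpen U)
    (h : ∀ k : ℝ → ℝ, Continuous k → (∀ s, 0 ≤ k s) → (∀ s, s ∉ U → k s = 0) →
      ∫⁻ s, ENNReal.ofReal (k s) ∂μ ≤ ∫⁻ s, ENNReal.ofReal (k s) ∂ν)
    {T : Set ℝ} (hT : MeasurableSet T) (hTU : T ⊆ U) : μ T ≤ ν T := by
  rw [hT.measure_eq_iSup_isCompact μ]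
  refine iSup_le fun K => iSup_le fun hKT => iSup_le fun hK => ?_
  refine le_trans ?_ (measure_mono hKT)
  obtain ⟨δ, hδ, hδU⟩ := hK.exists_thickening_subset_open hU (hKT.trans hTU)
  have hpos : ∀ j : ℕ, 0 < δ / ((j : ℝ) + 1) := fun j => by positivity
  have hlim : Tendsto (fun j : ℕ => δ / ((j : ℝ) + 1)) atTop (𝓝 0) := by
    have := (tendsto_one_div_add_atTop_nhds_zero_nat (𝕜 := ℝ)).const_mul δ
    simpa [div_eq_mul_inv] using this
  refine le_of_tendsto_of_tendsto'
    (tendsto_lintegral_thickenedIndicator_of_isClosed μ hK.isClosed hpos hlim)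
    (tendsto_lintegral_thickenedIndicator_of_isClosed ν hK.isClosed hpos hlim) fun j => ?_
  have := h (fun s => (thickenedIndicator (hpos j) K s : ℝ))
    (NNReal.continuous_coe.comp (thickenedIndicator (hpos j) K).continuous)
    (fun s => NNReal.coe_nonneg _) (fun s hs => by
      rw [thickenedIndicator_zero, NNReal.coe_zero]
      intro hs'
      refine hs (hδU (Metric.thickening_mono ?_ K hs'))
      exact div_le_self hδ.le (by linarith [(Nat.cast_nonneg j : (0 : ℝ) ≤ j)]))
  simpa only [ENNReal.ofReal_coe_nnreal] using this

/-- Two-sided estimate for the weighted mass of a level slab, obtained by testing the equation with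
the primitive of the weight. The lower bound is useful once `w = φ - V G ^ (p - 1)` has small mass
on the sublevel set `{G < M}`. -/
lemma level_bounds {n : ℕ} {Ω : Set (EuclideanSpace ℝ (Fin n))} (hΩ : IsOpen Ω)
    {p : ℝ} (hp : 1 < p) {A : EuclideanSpace ℝ (Fin n) → Matrix (Fin n) (Fin n) ℝ}
    (hA : IsEllipticMatrix Ω A) {V φ G : EuclideanSpace ℝ (Fin n) → ℝ} (hG : ContDiffOn ℝ 1 G Ω)
    (hsol : IsWeakSolution A p V φ Ω G) (hφ : IntegrableOn φ Ω)
    (hVG : IntegrableOn (fun x => V x * G x ^ (p - 1)) Ω)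
    (hinf : TendstoZeroAtInfinityIn Ω Ω G) (hGpos : ∀ x ∈ Ω, 0 < G x)
    {w : EuclideanSpace ℝ (Fin n) → ℝ} (hw : w = fun x => φ x - V x * G x ^ (p - 1))
    {a M : ℝ} (ha : 0 < a)
    {k : ℝ → ℝ} (hk : Continuous k) (hk0 : ∀ s, 0 ≤ k s) (hkz : ∀ s, s ∉ Ioo a M → k s = 0) :
    ((∫ x in Ω, w x) - ∫ x in Ω ∩ G ⁻¹' Iio M, |w x|) * (∫ s, k s)
        ≤ ∫ x in Ω, k (G x) * aNorm A x (gradient G x) ^ p ∧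
      (∫ x in Ω, k (G x) * aNorm A x (gradient G x) ^ p) ≤ (∫ x in Ω, |w x|) * ∫ s, k s := by
  have key := integral_comp_level hΩ hp hA hG hsol hφ hVG hinf hk ha
    (fun s hs => hkz s fun h => absurd h.1 (not_lt.2 hs))
  set h : ℝ → ℝ := fun y => ∫ s in (0)..y, k s with hh
  set I : ℝ := ∫ s, k s with hI
  have hII : ∀ y, M ≤ y → h y = I := fun y hy => by
    refine intervalIntegral.integral_eq_integral_of_support_subset fun s hs => ?_
    have : s ∈ Ioo a M := by
      by_contra h'
      exact hs (hkz s h')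
    exact ⟨ha.trans this.1, this.2.le.trans hy⟩
  have hint : ∀ b c, IntervalIntegrable k volume b c := fun b c => hk.intervalIntegrable _ _
  have hh0 : ∀ y, 0 < y → 0 ≤ h y := fun y hy =>
    intervalIntegral.integral_nonneg hy.le fun s _ => hk0 s
  have hhI : ∀ y, 0 < y → h y ≤ I := fun y hy => by
    rw [← hII (max y M) (le_max_right _ _)]
    have := intervalIntegral.integral_add_adjacent_intervals (hint 0 y) (hint y (max y M))
    have h2 : 0 ≤ ∫ s in y..(max y M), k s :=
      intervalIntegral.integral_nonneg (le_max_left _ _) fun s _ => hk0 s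
    simp only [hh]
    linarith
  have hhc : Continuous h := intervalIntegral.continuous_primitive hint 0
  have hI0 : 0 ≤ I := integral_nonneg hk0
  have hwint : IntegrableOn w Ω := by
    rw [hw]
    exact hφ.sub hVG
  have hhG : AEStronglyMeasurable (fun x => h (G x)) (volume.restrict Ω) :=
    (hhc.comp_continuousOn hG.continuousOn).aestronglyMeasurable hΩ.measurableSet
  have hbd : ∀ᵐ x ∂volume.restrict Ω, ‖h (G x)‖ ≤ I := by
    refine (ae_restrict_iff' hΩ.measurableSet).2 (Eventually.of_forall fun x hx => ?_)
    rw [Real.norm_eq_abs, abs_of_nonneg (hh0 _ (hGpos x hx))]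
    exact hhI _ (hGpos x hx)
  have hmul : ∀ u : EuclideanSpace ℝ (Fin n) → ℝ, IntegrableOn u Ω →
      IntegrableOn (fun x => u x * h (G x)) Ω := fun u hu => by
    exact Integrable.mul_bdd (c := I) hu hhG hbd
  have hid : ∫ x in Ω, k (G x) * aNorm A x (gradient G x) ^ p = ∫ x in Ω, w x * h (G x) := by
    have e : ∫ x in Ω, w x * h (G x) = (∫ x in Ω, φ x * h (G x)) -
        ∫ x in Ω, V x * G x ^ (p - 1) * h (G x) := by
      rw [← integral_sub (hmul _ hφ) (hmul _ hVG)]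
      simp only [hw, sub_mul]
    rw [e]
    simp only [hh] at key ⊢
    linarith
  rw [hid]
  have hmeas : MeasurableSet (Ω ∩ G ⁻¹' Iio M) :=
    measurableSet_inter_preimage_of_continuousOn hΩ hG.continuousOn Subset.rfl hΩ.measurableSet
      measurableSet_Iio
  constructor
  · have hi2 : IntegrableOn ((Ω ∩ G ⁻¹' Iio M).indicator fun x => |w x|) Ω :=
      IntegrableOn.indicator hwint.abs hmeas
    have e2 : ∫ x in Ω ∩ G ⁻¹' Iio M, |w x|
        = ∫ x in Ω, (Ω ∩ G ⁻¹' Iio M).indicator (fun x => |w x|) x := by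
      rw [integral_indicator hmeas, Measure.restrict_restrict hmeas,
        inter_eq_left.2 inter_subset_left]
    rw [e2, ← integral_sub hwint hi2, ← integral_mul_const]
    refine setIntegral_mono_on ((hwint.sub hi2).mul_const I) (hmul _ hwint) hΩ.measurableSet
      fun x hx => ?_
    by_cases hxM : M ≤ G x
    · rw [hII _ hxM, indicator_of_notMem fun h' => absurd h'.2 (not_lt.2 hxM), sub_zero]
    · have hxS : x ∈ Ω ∩ G ⁻¹' Iio M := ⟨hx, not_le.1 hxM⟩
      rw [indicator_of_mem hxS]
      have h1 := hh0 _ (hGpos x hx)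
      have h2 := hhI _ (hGpos x hx)
      nlinarith [neg_abs_le (w x), le_abs_self (w x)]
  · rw [← integral_mul_const]
    refine setIntegral_mono_on (hmul _ hwint) (hwint.abs.mul_const I) hΩ.measurableSet
      fun x hx => ?_
    calc w x * h (G x) ≤ |w x| * h (G x) :=
          mul_le_mul_of_nonneg_right (le_abs_self _) (hh0 _ (hGpos x hx))
      _ ≤ |w x| * I := mul_le_mul_of_nonneg_left (hhI _ (hGpos x hx)) (abs_nonneg _)

/-- An estimate of the form given by `level_bounds` passes from continuous weights to Borel sets of
levels. -/
lemma slab_bounds {n : ℕ} {Ω : Set (EuclideanSpace ℝ (Fin n))} (hΩ : IsOpen Ω)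
    {G g : EuclideanSpace ℝ (Fin n) → ℝ} (hG : ContinuousOn G Ω) (hg : ContinuousOn g Ω)
    (hg0 : ∀ x ∈ Ω, 0 ≤ g x) (hinf : TendstoZeroAtInfinityIn Ω Ω G)
    {a M : ℝ} (ha : 0 < a) {m₀ m₁ : ℝ≥0}
    (h : ∀ k : ℝ → ℝ, Continuous k → (∀ s, 0 ≤ k s) → (∀ s, s ∉ Ioo a M → k s = 0) →
      m₀ * (∫ s, k s) ≤ ∫ x in Ω, k (G x) * g x ∧
        (∫ x in Ω, k (G x) * g x) ≤ m₁ * ∫ s, k s)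
    {T : Set ℝ} (hT : MeasurableSet T) (hTU : T ⊆ Ioo a M) :
    m₀ * volume T ≤ ∫⁻ x in Ω ∩ G ⁻¹' T, ENNReal.ofReal (g x) ∧
      ∫⁻ x in Ω ∩ G ⁻¹' T, ENNReal.ofReal (g x) ≤ m₁ * volume T := by
  set S := Ω ∩ G ⁻¹' Ioo a M with hS
  have hSm : MeasurableSet S :=
    measurableSet_inter_preimage_of_continuousOn hΩ hG Subset.rfl hΩ.measurableSet
      measurableSet_Ioo
  have hKc := isCompact_superlevel hG hinf ha
  have hSK : S ⊆ {x ∈ Ω | a ≤ G x} := fun x hx => ⟨hx.1, hx.2.1.le⟩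
  obtain ⟨B, hB⟩ := hKc.exists_bound_of_continuousOn (hg.mono fun x hx => hx.1)
  have hSfin : volume S < ∞ := (measure_mono hSK).trans_lt hKc.measure_lt_top
  have hgm : AEMeasurable (fun x => ENNReal.ofReal (g x)) (volume.restrict S) :=
    ((hg.mono inter_subset_left).aemeasurable hSm).ennreal_ofReal
  set ρ := (volume.restrict S).withDensity fun x => ENNReal.ofReal (g x) with hρ
  have hGm0 : AEMeasurable G (volume.restrict S) := (hG.mono inter_subset_left).aemeasurable hSm
  have hGm : AEMeasurable G ρ := hGm0.mono_ac (withDensity_absolutelyContinuous _ _)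
  have hρfin : IsFiniteMeasure ρ := by
    refine isFiniteMeasure_withDensity ?_
    refine ne_of_lt (lt_of_le_of_lt (setLIntegral_mono' hSm
      (g := fun _ => ENNReal.ofReal B) fun x hx => ?_) ?_)
    · exact ENNReal.ofReal_le_ofReal ((le_abs_self _).trans (hB x (hSK hx)))
    · rw [setLIntegral_const]
      exact ENNReal.mul_lt_top ENNReal.ofReal_lt_top hSfin
  set ν := ρ.map G with hν
  have hνT : ν T = ∫⁻ x in Ω ∩ G ⁻¹' T, ENNReal.ofReal (g x) := by
    rw [hν, Measure.map_apply_of_aemeasurable hGm hT, hρ, withDensity_apply',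
      Measure.restrict_restrict' hSm]
    congr 2
    ext x
    constructor
    · rintro ⟨h1, h2, -⟩
      exact ⟨h2, h1⟩
    · rintro ⟨h1, h2⟩
      exact ⟨h2, h1, hTU h2⟩
  have hνk : ∀ k : ℝ → ℝ, Continuous k → (∀ s, 0 ≤ k s) → (∀ s, s ∉ Ioo a M → k s = 0) →
      ∫⁻ s, ENNReal.ofReal (k s) ∂ν = ENNReal.ofReal (∫ x in Ω, k (G x) * g x) := by
    intro k hk hk0 hkz
    have hkm : Measurable fun s => ENNReal.ofReal (k s) := hk.measurable.ennreal_ofReal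
    have hz : ∀ x ∈ Ω \ S, k (G x) * g x = 0 := fun x hx => by
      rw [hkz _ fun h' => hx.2 ⟨hx.1, h'⟩, zero_mul]
    rw [hν, lintegral_map' hkm.aemeasurable hGm, hρ,
      lintegral_withDensity_eq_lintegral_mul₀ (g := fun x => ENNReal.ofReal (k (G x))) hgm
        (hkm.comp_aemeasurable hGm0),
      setIntegral_eq_of_subset_of_forall_sdiff_eq_zero hΩ.measurableSet inter_subset_left hz,
      ofReal_integral_eq_lintegral_ofReal]
    · refine setLIntegral_congr_fun hSm fun x hx => ?_
      simp only [Pi.mul_apply]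
      rw [ENNReal.ofReal_mul (hk0 _), mul_comm]
    · have hc : ContinuousOn (fun x => k (G x) * g x) {x ∈ Ω | a ≤ G x} :=
        ((hk.comp_continuousOn hG).mul hg).mono fun x hx => hx.1
      exact (hc.integrableOn_compact hKc).mono_set hSK
    · refine (ae_restrict_iff' hSm).2 (Eventually.of_forall fun x hx => ?_)
      exact mul_nonneg (hk0 _) (hg0 x hx.1)
  have hvk : ∀ k : ℝ → ℝ, Continuous k → (∀ s, 0 ≤ k s) → (∀ s, s ∉ Ioo a M → k s = 0) →
      ∫⁻ s in Ioo a M, ENNReal.ofReal (k s) = ENNReal.ofReal (∫ s, k s) := by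
    intro k hk hk0 hkz
    rw [← setIntegral_eq_integral_of_forall_compl_eq_zero hkz,
      ofReal_integral_eq_lintegral_ofReal]
    · exact hk.integrableOn_Icc.mono_set Ioo_subset_Icc_self
    · exact Eventually.of_forall hk0
  have hvT : volume T = (volume.restrict (Ioo a M)) T := by
    rw [Measure.restrict_apply hT, inter_eq_left.2 hTU]
  have hsm : ∀ (m : ℝ≥0), (m : ℝ≥0∞) * volume T = (m • volume.restrict (Ioo a M)) T := by
    intro m
    rw [Measure.smul_apply, hvT]
    rfl
  have hsk : ∀ (m : ℝ≥0) (k : ℝ → ℝ), Continuous k → (∀ s, 0 ≤ k s) →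
      (∀ s, s ∉ Ioo a M → k s = 0) →
      ∫⁻ s, ENNReal.ofReal (k s) ∂(m • volume.restrict (Ioo a M))
        = ENNReal.ofReal (m * ∫ s, k s) := by
    intro m k hk hk0 hkz
    rw [lintegral_smul_measure, hvk k hk hk0 hkz, ENNReal.ofReal_mul m.coe_nonneg,
      ENNReal.ofReal_coe_nnreal]
    rfl
  rw [← hνT, hsm, hsm]
  constructor
  · refine measure_le_of_forall_continuous isOpen_Ioo (fun k hk hk0 hkz => ?_) hT hTU
    rw [hsk _ k hk hk0 hkz, hνk k hk hk0 hkz]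
    exact ENNReal.ofReal_le_ofReal (h k hk hk0 hkz).1
  · refine measure_le_of_forall_continuous isOpen_Ioo (fun k hk hk0 hkz => ?_) hT hTU
    rw [hsk _ k hk hk0 hkz, hνk k hk hk0 hkz]
    exact ENNReal.ofReal_le_ofReal (h k hk hk0 hkz).2

/-! ### Bounds on almost every level set -/

/-- An integrable function has small mass on small sublevel sets of a positive function. -/
lemma exists_small_sublevel {n : ℕ} {Ω : Set (EuclideanSpace ℝ (Fin n))} (hΩ : IsOpen Ω)
    {G w : EuclideanSpace ℝ (Fin n) → ℝ} (hG : ContinuousOn G Ω) (hGpos : ∀ x ∈ Ω, 0 < G x)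
    (hw : IntegrableOn w Ω) {ε b : ℝ} (hε : 0 < ε) (hb : 0 < b) :
    ∃ M, 0 < M ∧ M < b ∧ ∫ x in Ω ∩ G ⁻¹' Iio M, |w x| < ε := by
  have hmeas : ∀ M, MeasurableSet (Ω ∩ G ⁻¹' Iio M) := fun M =>
    measurableSet_inter_preimage_of_continuousOn hΩ hG Subset.rfl hΩ.measurableSet
      measurableSet_Iio
  have hlim0 := tendsto_one_div_add_atTop_nhds_zero_nat (𝕜 := ℝ)
  have hlim : Tendsto (fun j : ℕ => ∫ x in Ω,
      (Ω ∩ G ⁻¹' Iio (1 / ((j : ℝ) + 1))).indicator (fun x => |w x|) x) atTop (𝓝 0) := by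
    rw [← integral_zero (EuclideanSpace ℝ (Fin n)) ℝ (μ := volume.restrict Ω)]
    refine tendsto_integral_of_dominated_convergence (fun x => |w x|) ?_ hw.abs ?_ ?_
    · exact fun j => (hw.abs.indicator (hmeas _)).aestronglyMeasurable
    · refine fun j => Eventually.of_forall fun x => ?_
      refine (norm_indicator_le_norm_self _ _).trans ?_
      rw [Real.norm_eq_abs, abs_abs]
    · refine (ae_restrict_iff' hΩ.measurableSet).2 (Eventually.of_forall fun x hx => ?_)
      refine tendsto_const_nhds.congr' ?_
      filter_upwards [hlim0.eventually (gt_mem_nhds (hGpos x hx))] with j hj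
      rw [indicator_of_notMem]
      exact fun h => absurd h.2 (not_lt.2 hj.le)
  obtain ⟨j, hj1, hj2⟩ := ((hlim.eventually (gt_mem_nhds hε)).and
    (hlim0.eventually (gt_mem_nhds hb))).exists
  refine ⟨1 / ((j : ℝ) + 1), by positivity, hj2, ?_⟩
  rwa [integral_indicator (hmeas _), Measure.restrict_restrict (hmeas _),
    inter_eq_left.2 inter_subset_left] at hj1

/-- Linear bounds for the mass of all slabs `G ∈ T` yield, through the coarea comparison,
almost everywhere bounds for the level-set integrals. -/
lemma CoareaComparable.ae_bounds {m : ℕ} {D : ℝ≥0} {G : EuclideanSpace ℝ (Fin (m + 1)) → ℝ}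
    {f g : EuclideanSpace ℝ (Fin (m + 1)) → ℝ≥0∞} {Ω : Set (EuclideanSpace ℝ (Fin (m + 1)))}
    (hD : CoareaComparable D G f g Ω) {M : ℝ} (hM : 0 < M) {m₀ m₁ : ℝ≥0}
    (h : ∀ a, 0 < a → a < M → ∀ T, MeasurableSet T → T ⊆ Ioo a M →
      m₀ * volume T ≤ ∫⁻ x in Ω ∩ G ⁻¹' T, g x ∧
        ∫⁻ x in Ω ∩ G ⁻¹' T, g x ≤ m₁ * volume T) :
    ∀ᵐ t : ℝ, t ∈ Ioo 0 M →
      (m₀ : ℝ≥0∞) ≤ D * (D * ∫⁻ x in Ω ∩ G ⁻¹' {t}, f x ∂(μH[(m : ℝ)])) ∧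
        ∫⁻ x in Ω ∩ G ⁻¹' {t}, f x ∂(μH[(m : ℝ)]) ≤ D * (D * m₁) := by
  obtain ⟨J, hJm, hJ1, hJ2, hJ3⟩ := hD
  have step : ∀ a, 0 < a → a < M → ∀ᵐ t : ℝ, t ∈ Ioo a M →
      (m₀ : ℝ≥0∞) ≤ D * J t ∧ J t ≤ D * m₁ := by
    intro a ha haM
    have hlow : (fun _ => (m₀ : ℝ≥0∞)) ≤ᵐ[volume.restrict (Ioo a M)] fun t => D * J t := by
      refine ae_le_of_forall_setLIntegral_le_of_sigmaFinite measurable_const fun s hs _ => ?_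
      rw [Measure.restrict_restrict hs, setLIntegral_const, lintegral_const_mul _ hJm]
      have hsm := hs.inter (measurableSet_Ioo (a := a) (b := M))
      exact (h a ha haM _ hsm inter_subset_right).1.trans (hJ3 _ hsm).2
    have hup : J ≤ᵐ[volume.restrict (Ioo a M)] fun _ => (D : ℝ≥0∞) * m₁ := by
      refine ae_le_of_forall_setLIntegral_le_of_sigmaFinite hJm fun s hs _ => ?_
      rw [Measure.restrict_restrict hs, setLIntegral_const, mul_assoc]
      have hsm := hs.inter (measurableSet_Ioo (a := a) (b := M))
      exact (hJ3 _ hsm).1.trans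
        (mul_le_mul_right (h a ha haM _ hsm inter_subset_right).2 _)
    rw [← ae_restrict_iff' measurableSet_Ioo]
    filter_upwards [hlow, hup] with t h1 h2 using ⟨h1, h2⟩
  have hall : ∀ᵐ t : ℝ, ∀ j : ℕ, t ∈ Ioo (M / ((j : ℝ) + 2)) M →
      (m₀ : ℝ≥0∞) ≤ D * J t ∧ J t ≤ D * m₁ :=
    ae_all_iff.2 fun j => step _ (by positivity) (by
      rw [div_lt_iff₀ (by positivity)]
      nlinarith [(Nat.cast_nonneg j : (0 : ℝ) ≤ j)])
  filter_upwards [hall] with t ht htM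
  obtain ⟨j, hj⟩ := exists_nat_gt (M / t)
  have hj' : M / ((j : ℝ) + 2) < t := by
    rw [div_lt_iff₀ htM.1] at hj
    rw [div_lt_iff₀ (by positivity)]
    nlinarith [htM.1]
  obtain ⟨h1, h2⟩ := ht j ⟨hj', htM.2⟩
  exact ⟨h1.trans (mul_le_mul_right (hJ1 t) _), (hJ2 t).trans (mul_le_mul_right h2 _)⟩

lemma fluxIntegral_eq_toReal {m : ℕ} {Ω : Set (EuclideanSpace ℝ (Fin (m + 1)))}
    (hΩ : IsOpen Ω) {p : ℝ} (hp : 1 < p)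
    {A : EuclideanSpace ℝ (Fin (m + 1)) → Matrix (Fin (m + 1)) (Fin (m + 1)) ℝ}
    (hA : IsEllipticMatrix Ω A) {G : EuclideanSpace ℝ (Fin (m + 1)) → ℝ}
    (hG : ContDiffOn ℝ 1 G Ω) (t : ℝ) :
    fluxIntegral A p G {x ∈ Ω | G x = t} =
      (∫⁻ x in Ω ∩ G ⁻¹' {t}, ENNReal.ofReal
        (coareaDensity G (fun x => aNorm A x (gradient G x) ^ p) x) ∂(μH[(m : ℝ)])).toReal := by
  have hgr := continuousOn_gradient hΩ hG
  have hS : MeasurableSet (Ω ∩ G ⁻¹' {t}) :=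
    measurableSet_inter_preimage_of_continuousOn hΩ hG.continuousOn Subset.rfl hΩ.measurableSet
      (measurableSet_singleton t)
  -- Division by zero gives `0`, so the case distinction at critical points is automatic.
  have hden : coareaDensity G (fun x => aNorm A x (gradient G x) ^ p) =
      fun x => aNorm A x (gradient G x) ^ p / ‖gradient G x‖ := by
    funext x
    unfold coareaDensity
    split_ifs with h0
    · simp [h0]
    · rfl
  have hdim : ((m + 1 : ℕ) : ℝ) - 1 = m := by
    push_cast
    ring
  have hgc : ContinuousOn (fun x => aNorm A x (gradient G x) ^ p) (Ω ∩ G ⁻¹' {t}) :=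
    ((continuousOn_aInner hΩ hA hgr hgr).sqrt.rpow_const fun x _ => Or.inr (by linarith)).mono
      inter_subset_left
  have e : fluxIntegral A p G {x ∈ Ω | G x = t} =
      ∫ x in Ω ∩ G ⁻¹' {t}, coareaDensity G (fun x => aNorm A x (gradient G x) ^ p) x
        ∂(μH[(m : ℝ)]) := by
    rw [← hdim]
    rfl
  rw [e, integral_eq_lintegral_of_nonneg_ae]
  · rw [hden]
    refine Eventually.of_forall fun x => ?_
    exact div_nonneg (Real.rpow_nonneg (Real.sqrt_nonneg _) _) (norm_nonneg _)
  · rw [hden]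
    exact ((hgc.aemeasurable hS).div
      ((hgr.norm.mono inter_subset_left).aemeasurable hS)).aestronglyMeasurable

theorem two_sided_flux_bound_green_potential
    {n : ℕ} (hn : 2 ≤ n) (Ω : Set (EuclideanSpace ℝ (Fin n)))
    (hΩopen : IsOpen Ω) (hΩconn : IsConnected Ω)
    (p : ℝ) (hp : 1 < p)
    (A : EuclideanSpace ℝ (Fin n) → Matrix (Fin n) (Fin n) ℝ)
    (hA : IsEllipticMatrix Ω A)
    (V : EuclideanSpace ℝ (Fin n) → ℝ) (hV : InMorreyLoc p Ω V)
    (hsub : IsSubcritical A p V Ω)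
    (φ : EuclideanSpace ℝ (Fin n) → ℝ) (hφ : IsTestFun Ω φ) (hφnonneg : ∀ x, 0 ≤ φ x)
    (hφne : ∃ x, φ x ≠ 0)
    (G : EuclideanSpace ℝ (Fin n) → ℝ) (α : ℝ) (hα : α ∈ Set.Ioc (0:ℝ) 1)
    (hG1 : IsC1Holder α Ω G) (hGpos : ∀ x ∈ Ω, 0 < G x)
    (hGsol : IsWeakSolution A p V φ Ω G)
    (hGinf : TendstoZeroAtInfinityIn Ω Ω G)
    (hVG : (∫ x in Ω, V x * G x ^ (p - 1)) < 0)
    (hVGfin : (∫⁻ x in Ω, ENNReal.ofReal (|V x| * G x ^ (p - 1))) < ⊤) :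
    ∃ M : ℝ, 0 < M ∧ (∃ x ∈ Ω, M < G x) ∧
      ∃ C > (0:ℝ), ∀ᵐ t : ℝ ∂volume,
        (t ∈ Set.Ioo 0 M ∧ tsupport φ ⊆ {x ∈ Ω | t < G x}) →
        C⁻¹ ≤ fluxIntegral A p G {x ∈ Ω | G x = t} ∧
          fluxIntegral A p G {x ∈ Ω | G x = t} ≤ C := by

  obtain ⟨m, rfl⟩ : ∃ m, n = m + 1 := ⟨n - 1, by omega⟩
  have hG := hG1.1
  have hgr := continuousOn_gradient hΩopen hG
  have hφint : Integrable φ := hφ.1.continuous.integrable_of_hasCompactSupport hφ.2.1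
  have hVGint : IntegrableOn (fun x => V x * G x ^ (p - 1)) Ω := by
    -- The integral of a non-integrable function is `0`, which is excluded by `hVG`.
    by_contra h
    rw [integral_undef h] at hVG
    exact lt_irrefl _ hVG
  set w : EuclideanSpace ℝ (Fin (m + 1)) → ℝ := fun x => φ x - V x * G x ^ (p - 1) with hw
  have hwint : IntegrableOn w Ω := hφint.integrableOn.sub hVGint
  have hwpos : 0 < ∫ x in Ω, w x := by
    rw [hw, integral_sub hφint.integrableOn hVGint]
    have : 0 ≤ ∫ x in Ω, φ x := integral_nonneg hφnonneg
    linarith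
  obtain ⟨x₁, hx₁⟩ := hΩconn.nonempty
  obtain ⟨M, hM, hMx, hMw⟩ := exists_small_sublevel hΩopen hG.continuousOn hGpos hwint
    (half_pos hwpos) (hGpos x₁ hx₁)
  set g : EuclideanSpace ℝ (Fin (m + 1)) → ℝ := fun x => aNorm A x (gradient G x) ^ p with hg
  have hgc : ContinuousOn g Ω :=
    (continuousOn_aInner hΩopen hA hgr hgr).sqrt.rpow_const fun x _ => Or.inr (by linarith)
  have hg0 : ∀ x, 0 ≤ g x := fun x => Real.rpow_nonneg (Real.sqrt_nonneg _) _
  obtain ⟨D, hD⟩ := exists_coareaComparable hΩopen hG g hgc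
    (fun x hx hx0 => Real.rpow_pos_of_pos (Real.sqrt_pos.2 (hA.posdef x hx _ hx0)) _)
    (fun x _ hx0 => by
      simp [hg, hx0, aNorm, aInner, Real.zero_rpow (by linarith : p ≠ 0)])
  set m₀ : ℝ≥0 := ⟨(∫ x in Ω, w x) / 2, (half_pos hwpos).le⟩ with hm₀
  set m₁ : ℝ≥0 := ⟨∫ x in Ω, |w x|, integral_nonneg fun _ => abs_nonneg _⟩ with hm₁
  have hm₀pos : 0 < (m₀ : ℝ) := half_pos hwpos
  have hslab : ∀ a, 0 < a → a < M → ∀ T, MeasurableSet T → T ⊆ Ioo a M →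
      m₀ * volume T ≤ ∫⁻ x in Ω ∩ G ⁻¹' T, ENNReal.ofReal (g x) ∧
        ∫⁻ x in Ω ∩ G ⁻¹' T, ENNReal.ofReal (g x) ≤ m₁ * volume T := by
    intro a ha haM T hT hTU
    refine slab_bounds hΩopen hG.continuousOn hgc (fun x _ => hg0 x) hGinf ha
      (fun k hk hk0 hkz => ?_) hT hTU
    obtain ⟨h1, h2⟩ := level_bounds hΩopen hp hA hG hGsol hφint.integrableOn hVGint hGinf hGpos
      hw ha hk hk0 hkz
    refine ⟨le_trans (mul_le_mul_of_nonneg_right ?_ (integral_nonneg hk0)) h1, h2⟩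
    show (∫ x in Ω, w x) / 2 ≤ _
    linarith
  refine ⟨M, hM, ⟨x₁, hx₁, hMx⟩, D * (D * m₁) + D * D / m₀ + 1, by positivity, ?_⟩
  filter_upwards [hD.ae_bounds hM hslab] with t ht hts
  obtain ⟨h1, h2⟩ := ht hts.1
  rw [fluxIntegral_eq_toReal hΩopen hp hA hG]
  set F := ∫⁻ x in Ω ∩ G ⁻¹' {t}, ENNReal.ofReal (coareaDensity G g x) ∂(μH[(m : ℝ)]) with hF
  have hFtop : F ≠ ∞ := ne_top_of_le_ne_top (by finiteness) h2
  have h1' : (m₀ : ℝ) ≤ D * (D * F.toReal) := by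
    have := ENNReal.toReal_mono (by finiteness) h1
    simpa [ENNReal.toReal_mul] using this
  have h2' : F.toReal ≤ D * (D * m₁) := by
    have := ENNReal.toReal_mono (by finiteness) h2
    simpa [ENNReal.toReal_mul] using this
  have hDD : (0 : ℝ) ≤ D * D / m₀ := by positivity
  have hDm : (0 : ℝ) ≤ D * (D * m₁) := by positivity
  have hF0 : 0 ≤ F.toReal := ENNReal.toReal_nonneg
  constructor
  · rw [inv_le_iff_one_le_mul₀ (by positivity)]
    have h3 : 1 ≤ D * D / m₀ * F.toReal := by
      rw [div_mul_eq_mul_div, le_div_iff₀ hm₀pos]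
      linarith
    nlinarith
  · linarith
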